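/- arXiv:1807.00027 — 3 statements merged into one kernel-verified Lean document; each statement's English description precedes it below -/
import Mathlib

section
/- Let (μ_i)_{1≤i≤n} be Borel probability measures on ℝ^d. For a set S ⊂ [n] := {1,…,n}, let μ_S denote the convolution of (μ_i)_{i∈S}. If 𝒞 is a collection of distinct subsets of [n] with t := min_{i∈[n]} #{S ∈ 𝒞 : i ∈ S} ≥ 1, then C_p(μ_{[n]}) ≤ (1/t) Σ_{S∈𝒞} C_p(μ_S). -/
open MeasureTheory ProbabilityTheory ENNReal

/-- The Poincaré constant of a Borel probability measure on `ℝ^d`: the smallest constant `C`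
such that `Var_μ(f) ≤ C ∫ |∇f|² dμ` for all locally Lipschitz `f : ℝ^d → ℝ`
(`+∞` if no finite constant works). -/
noncomputable def poincareConst {d : ℕ} (μ : Measure (EuclideanSpace ℝ (Fin d))) : ℝ≥0∞ :=
  sInf {C : ℝ≥0∞ | ∀ f : EuclideanSpace ℝ (Fin d) → ℝ, LocallyLipschitz f →
    evariance f μ ≤ C * ∫⁻ x, ‖gradient f x‖₊ ^ 2 ∂μ}

/-- The convolution `⋆_{i ∈ S} μ_i` of the measures `(μ_i)_{i ∈ S}`, i.e. the law of
`∑_{i ∈ S} X_i` for independent `X_i ~ μ_i`. -/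
noncomputable def convOver {d n : ℕ} (μs : Fin n → Measure (EuclideanSpace ℝ (Fin d)))
    (S : Finset (Fin n)) : Measure (EuclideanSpace ℝ (Fin d)) :=
  Measure.map (fun x : Fin n → EuclideanSpace ℝ (Fin d) => ∑ i ∈ S, x i) (Measure.pi μs)

/-!
For independent coordinates, the expected conditional variance `E Var(F | X_{Sᶜ})` is a monotone
submodular function of `S`: its second differences are controlled because averaging over further
coordinates is a contraction of `L²`. Shearer's inequality for submodular functions therefore gives
`Var F ≤ ∑_S w_S E Var(F | X_{Sᶜ})` for every fractional cover `w` of the coordinates, first for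
bounded `F` and then, by truncation, without any integrability. For
`F(x) = f(x_1 + ⋯ + x_n)`, the Poincaré inequality of `μ_S` applied conditionally on `X_{Sᶜ}` bounds
each term by `C_p(μ_S) ∫ |∇f|² dμ_{[n]}`, and `w = 1 / t` is a fractional cover.
-/

open Filter Topology
open scoped NNReal

lemma le_sum_mul_inter_of_submodular {ι R : Type*} [DecidableEq ι] [CommRing R] [LinearOrder R]
    [IsStrictOrderedRing R] {g : Finset ι → R} (hmono : Monotone g)
    (hsub : ∀ S T, g (S ∪ T) + g (S ∩ T) ≤ g S + g T) (hempty : g ∅ = 0)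
    {𝒞 : Finset (Finset ι)} {w : Finset ι → R} (hw : ∀ S ∈ 𝒞, 0 ≤ w S) (U : Finset ι)
    (hcover : ∀ i ∈ U, 1 ≤ ∑ S ∈ 𝒞 with i ∈ S, w S) :
    g U ≤ ∑ S ∈ 𝒞, w S * g (S ∩ U) := by
  induction U using Finset.induction_on with
  | empty => simp [hempty]
  | insert i U _ ih =>
    set δ := g (insert i U) - g U with hδ
    have hδ_nonneg : 0 ≤ δ := sub_nonneg.2 (hmono (Finset.subset_insert i U))
    have hdiminishing : ∀ S, g (S ∩ U) + (if i ∈ S then δ else 0) ≤ g (S ∩ insert i U) := by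
      intro S
      split_ifs with hiS
      · have hunion : S ∩ insert i U ∪ U = insert i U := by grind
        have hinter : S ∩ insert i U ∩ U = S ∩ U := by grind
        have h := hsub (S ∩ insert i U) U
        rw [hunion, hinter] at h
        linarith
      · rw [Finset.inter_insert_of_notMem hiS, add_zero]
    calc g (insert i U) = g U + 1 * δ := by rw [hδ]; ring
      _ ≤ ∑ S ∈ 𝒞, w S * g (S ∩ U) + (∑ S ∈ 𝒞 with i ∈ S, w S) * δ := by
        gcongr
        · exact ih fun j hj => hcover j (Finset.mem_insert_of_mem hj)
        · exact hcover i (Finset.mem_insert_self i U)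
      _ = ∑ S ∈ 𝒞, w S * (g (S ∩ U) + if i ∈ S then δ else 0) := by
        simp only [mul_add, Finset.sum_add_distrib, Finset.sum_mul, Finset.sum_filter,
          mul_ite, mul_zero, ite_mul, zero_mul]
      _ ≤ ∑ S ∈ 𝒞, w S * g (S ∩ insert i U) :=
        Finset.sum_le_sum fun S hS => mul_le_mul_of_nonneg_left (hdiminishing S) (hw S hS)

section Variance

variable {Ω : Type*} [MeasurableSpace Ω] {μ : Measure Ω} {X : Ω → ℝ}

lemma lintegral_enorm_sub_sq_eq_ofReal_integral {c : ℝ} [IsFiniteMeasure μ] (hX : MemLp X 2 μ) :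
    ∫⁻ ω, ‖X ω - c‖ₑ ^ 2 ∂μ = ENNReal.ofReal (∫ ω, (X ω - c) ^ 2 ∂μ) := by
  have hXc : Integrable (fun ω => (X ω - c) ^ 2) μ := (hX.sub (memLp_const c)).integrable_sq
  rw [ofReal_integral_eq_lintegral_ofReal hXc (ae_of_all _ fun _ => sq_nonneg _)]
  refine lintegral_congr fun ω => ?_
  rw [← enorm_pow, Real.enorm_of_nonneg (sq_nonneg _)]

lemma lintegral_enorm_sub_sq_eq_top [IsFiniteMeasure μ] (hX : AEStronglyMeasurable X μ)
    (hX2 : ¬MemLp X 2 μ) (c : ℝ) : ∫⁻ ω, ‖X ω - c‖ₑ ^ 2 ∂μ = ∞ := by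
  by_contra hfin
  have hdiff : MemLp (fun ω => X ω - c) 2 μ := by
    refine ⟨hX.sub aestronglyMeasurable_const, ?_⟩
    rw [eLpNorm_lt_top_iff_lintegral_rpow_enorm_lt_top two_ne_zero ofNat_ne_top]
    simpa using lt_top_iff_ne_top.2 hfin
  exact hX2 (by simpa [Pi.add_def] using hdiff.add (memLp_const c))

lemma lintegral_enorm_sub_sq [IsProbabilityMeasure μ] (hX : AEStronglyMeasurable X μ) (c : ℝ) :
    ∫⁻ ω, ‖X ω - c‖ₑ ^ 2 ∂μ = evariance X μ + ‖c - μ[X]‖ₑ ^ 2 := by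
  by_cases hX2 : MemLp X 2 μ
  · have hXc : MemLp (fun ω => X ω - c) 2 μ := hX2.sub (memLp_const c)
    have hmean : ∫ ω, X ω - c ∂μ = μ[X] - c := by
      simp [integral_sub (hX2.integrable one_le_two)]
    have hvar := variance_eq_sub hXc
    rw [variance_sub_const hX, hmean, Pi.pow_def] at hvar
    rw [lintegral_enorm_sub_sq_eq_ofReal_integral hX2, ← ofReal_variance hX2, ← enorm_pow,
      Real.enorm_of_nonneg (sq_nonneg _), ← ofReal_add (variance_nonneg X μ) (sq_nonneg _), hvar]
    congr 1
    ring
  · rw [lintegral_enorm_sub_sq_eq_top hX hX2, evariance_eq_top hX hX2, top_add]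

lemma evariance_le_lintegral_enorm_sub_sq [IsProbabilityMeasure μ]
    (hX : AEStronglyMeasurable X μ) (c : ℝ) : evariance X μ ≤ ∫⁻ ω, ‖X ω - c‖ₑ ^ 2 ∂μ :=
  (lintegral_enorm_sub_sq hX c).symm ▸ le_self_add

lemma evariance_comp_le_of_lipschitzWith [IsProbabilityMeasure μ] {φ : ℝ → ℝ} {K : ℝ≥0}
    (hφ : LipschitzWith K φ) (hX : AEStronglyMeasurable X μ) :
    evariance (φ ∘ X) μ ≤ K ^ 2 * evariance X μ :=
  calc evariance (φ ∘ X) μ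
      ≤ ∫⁻ ω, ‖φ (X ω) - φ μ[X]‖ₑ ^ 2 ∂μ :=
        evariance_le_lintegral_enorm_sub_sq (hφ.continuous.comp_aestronglyMeasurable hX) _
    _ ≤ ∫⁻ ω, K ^ 2 * ‖X ω - μ[X]‖ₑ ^ 2 ∂μ := by
        gcongr with ω
        simpa only [← mul_pow, edist_eq_enorm_sub] using pow_le_pow_left' (hφ (X ω) μ[X]) 2
    _ = K ^ 2 * evariance X μ := lintegral_const_mul' _ _ (by simp)

lemma lintegral_lintegral_enorm_sub_sq [IsProbabilityMeasure μ] (hX : AEStronglyMeasurable X μ) :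
    ∫⁻ ω, ∫⁻ ω', ‖X ω' - X ω‖ₑ ^ 2 ∂μ ∂μ = 2 * evariance X μ := by
  simp only [lintegral_enorm_sub_sq hX]
  rw [lintegral_add_left measurable_const, lintegral_const, measure_univ, mul_one, ← evariance,
    two_mul]

lemma evariance_le_liminf [IsProbabilityMeasure μ] {Y : ℕ → Ω → ℝ}
    (hY : ∀ N, AEStronglyMeasurable (Y N) μ)
    (hlim : ∀ᵐ ω ∂μ, Tendsto (Y · ω) atTop (𝓝 (X ω))) :
    evariance X μ ≤ liminf (fun N => evariance (Y N) μ) atTop := by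
  have hX : AEStronglyMeasurable X μ := aestronglyMeasurable_of_tendsto_ae atTop hY hlim
  have hYdist : ∀ N, AEMeasurable (fun ω => ∫⁻ ω', ‖Y N ω' - Y N ω‖ₑ ^ 2 ∂μ) μ := fun N => by
    simp only [lintegral_enorm_sub_sq (hY N)]
    have := (hY N).aemeasurable
    fun_prop
  -- The mean drops out of the two-copy formula for the variance, so Fatou's lemma applies to it.
  refine (ENNReal.mul_le_mul_iff_right two_ne_zero ofNat_ne_top).1 ?_
  calc 2 * evariance X μ
      = ∫⁻ ω, ∫⁻ ω', ‖X ω' - X ω‖ₑ ^ 2 ∂μ ∂μ := (lintegral_lintegral_enorm_sub_sq hX).symm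
    _ ≤ ∫⁻ ω, ∫⁻ ω', liminf (fun N => ‖Y N ω' - Y N ω‖ₑ ^ 2) atTop ∂μ ∂μ := by
        refine lintegral_mono_ae (hlim.mono fun ω hω => lintegral_mono_ae (hlim.mono ?_))
        exact fun ω' hω' => (ENNReal.Tendsto.pow (hω'.sub hω).enorm).liminf_eq.ge
    _ ≤ ∫⁻ ω, liminf (fun N => ∫⁻ ω', ‖Y N ω' - Y N ω‖ₑ ^ 2 ∂μ) atTop ∂μ := by
        refine lintegral_mono fun ω => lintegral_liminf_le' fun N => ?_
        have := (hY N).aemeasurable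
        fun_prop
    _ ≤ liminf (fun N => ∫⁻ ω, ∫⁻ ω', ‖Y N ω' - Y N ω‖ₑ ^ 2 ∂μ ∂μ) atTop :=
        lintegral_liminf_le' hYdist
    _ = 2 * liminf (fun N => evariance (Y N) μ) atTop := by
        simp only [lintegral_lintegral_enorm_sub_sq (hY _)]
        exact ENNReal.liminf_const_mul_of_ne_top ofNat_ne_top

lemma evariance_map {Ω' : Type*} [MeasurableSpace Ω'] {ν : Measure Ω'} {Z : Ω' → Ω}
    (hX : AEStronglyMeasurable X (ν.map Z)) (hZ : AEMeasurable Z ν) :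
    evariance X (ν.map Z) = evariance (X ∘ Z) ν := by
  have := hX.aemeasurable
  rw [evariance, evariance, integral_map hZ hX, lintegral_map' (by fun_prop) hZ]
  rfl

end Variance

@[fun_prop]
lemma measurable_finsetPiecewise {ι α : Type*} [DecidableEq ι] {Ω : ι → Type*}
    [∀ i, MeasurableSpace (Ω i)] [MeasurableSpace α] (S : Finset ι)
    {f g : α → ∀ i, Ω i} (hf : Measurable f) (hg : Measurable g) :
    Measurable fun a => S.piecewise (f a) (g a) := by
  refine measurable_pi_lambda _ fun i => ?_
  by_cases hi : i ∈ S
  · simpa [hi] using measurable_pi_iff.1 hf i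
  · simpa [hi] using measurable_pi_iff.1 hg i

section ProductMeasure

variable {ι : Type*} [Fintype ι] [DecidableEq ι] {Ω : ι → Type*} [∀ i, MeasurableSpace (Ω i)]
  (μ : ∀ i, Measure (Ω i))

/-- The conditional expectation of `F` given the coordinates outside `S`, where `μ i` is the law of
the `i`-th coordinate. -/
noncomputable def coordAverage (S : Finset ι) (F : (∀ i, Ω i) → ℝ) (x : ∀ i, Ω i) : ℝ :=
  ∫ y, F (S.piecewise y x) ∂Measure.pi μ

/-- The expectation of the conditional variance of `F` given the coordinates outside `S`, valued in
`ℝ≥0∞` so that it is meaningful without integrability of `F`. -/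
noncomputable def expCondVar (S : Finset ι) (F : (∀ i, Ω i) → ℝ) : ℝ≥0∞ :=
  ∫⁻ x, evariance (fun y => F (S.piecewise y x)) (Measure.pi μ) ∂Measure.pi μ

lemma coordAverage_coordAverage_mul (S : Finset ι) (F G : (∀ i, Ω i) → ℝ) :
    coordAverage μ S (coordAverage μ S F * G) = coordAverage μ S F * coordAverage μ S G := by
  ext x
  simp only [coordAverage, Pi.mul_apply, Finset.piecewise_idem_right, integral_const_mul]

variable [∀ i, IsProbabilityMeasure (μ i)]

lemma measurePreserving_finsetPiecewise (S : Finset ι) :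
    MeasurePreserving (fun p : (∀ i, Ω i) × (∀ i, Ω i) => S.piecewise p.2 p.1)
      ((Measure.pi μ).prod (Measure.pi μ)) (Measure.pi μ) := by
  have hmeas : Measurable fun p : (∀ i, Ω i) × (∀ i, Ω i) => S.piecewise p.2 p.1 := by fun_prop
  refine ⟨hmeas, (Measure.pi_eq fun A hA => ?_).symm⟩
  have hpreimage : (fun p : (∀ i, Ω i) × (∀ i, Ω i) => S.piecewise p.2 p.1) ⁻¹' Set.univ.pi A =
      Set.univ.pi (fun i => if i ∈ S then Set.univ else A i) ×ˢ
        Set.univ.pi (fun i => if i ∈ S then A i else Set.univ) := by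
    ext p
    simp only [Set.mem_preimage, Set.mem_prod, Set.mem_univ_pi, ← forall_and]
    refine forall_congr' fun i => ?_
    by_cases hi : i ∈ S <;> simp [hi]
  rw [Measure.map_apply hmeas (.univ_pi hA), hpreimage, Measure.prod_prod, Measure.pi_pi,
    Measure.pi_pi, ← Finset.prod_mul_distrib]
  refine Finset.prod_congr rfl fun i _ => ?_
  by_cases hi : i ∈ S <;> simp [hi]

lemma lintegral_lintegral_finsetPiecewise (S : Finset ι) {H : (∀ i, Ω i) → ℝ≥0∞}
    (hH : Measurable H) :
    ∫⁻ x, ∫⁻ y, H (S.piecewise y x) ∂Measure.pi μ ∂Measure.pi μ = ∫⁻ x, H x ∂Measure.pi μ := by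
  rw [← (measurePreserving_finsetPiecewise μ S).lintegral_comp hH, lintegral_prod _ (by fun_prop)]

variable {μ} {F : (∀ i, Ω i) → ℝ} {K : ℝ} {S T : Finset ι}

lemma expCondVar_univ : expCondVar μ Finset.univ F = evariance F (Measure.pi μ) := by
  simp [expCondVar]

lemma measurable_coordAverage (S : Finset ι) (hF : Measurable F) :
    Measurable (coordAverage μ S F) :=
  StronglyMeasurable.measurable <| StronglyMeasurable.integral_prod_right'
    (f := fun p : (∀ i, Ω i) × (∀ i, Ω i) => F (S.piecewise p.2 p.1))
    (Measurable.stronglyMeasurable (by fun_prop))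

lemma abs_coordAverage_le (S : Finset ι) (hK : ∀ x, |F x| ≤ K) (x : ∀ i, Ω i) :
    |coordAverage μ S F x| ≤ K := by
  simpa [coordAverage] using norm_integral_le_of_norm_le_const (μ := Measure.pi μ)
    (f := fun y => F (S.piecewise y x)) (.of_forall fun y => hK _)

lemma memLp_coordAverage (S : Finset ι) (hF : Measurable F) (hK : ∀ x, |F x| ≤ K) (p : ℝ≥0∞) :
    MemLp (coordAverage μ S F) p (Measure.pi μ) :=
  .of_bound (measurable_coordAverage S hF).aestronglyMeasurable K
    (.of_forall (abs_coordAverage_le S hK))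

lemma integral_coordAverage (S : Finset ι) (hF : Integrable F (Measure.pi μ)) :
    ∫ x, coordAverage μ S F x ∂Measure.pi μ = ∫ x, F x ∂Measure.pi μ := by
  have hmp := measurePreserving_finsetPiecewise μ S
  have hFpw : AEStronglyMeasurable F (Measure.map
      (fun p : (∀ i, Ω i) × (∀ i, Ω i) => S.piecewise p.2 p.1) _) :=
    hmp.map_eq.symm ▸ hF.aestronglyMeasurable
  calc ∫ x, coordAverage μ S F x ∂Measure.pi μ
      = ∫ p, F (S.piecewise p.2 p.1) ∂(Measure.pi μ).prod (Measure.pi μ) :=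
        (integral_prod _ (hmp.integrable_comp_of_integrable hF)).symm
    _ = ∫ x, F x ∂Measure.pi μ := by
        rw [← integral_map hmp.aemeasurable hFpw, hmp.map_eq]

lemma coordAverage_empty : coordAverage μ ∅ F = F := by
  ext x
  simp [coordAverage]

lemma memLp_comp_finsetPiecewise (S : Finset ι) (hF : Measurable F) (hK : ∀ x, |F x| ≤ K)
    (x : ∀ i, Ω i) (p : ℝ≥0∞) : MemLp (fun y => F (S.piecewise y x)) p (Measure.pi μ) :=
  .of_bound (Measurable.aestronglyMeasurable (by fun_prop)) K (.of_forall fun _ => hK _)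

lemma integrable_comp_finsetPiecewise (S : Finset ι) (hF : Measurable F) (hK : ∀ x, |F x| ≤ K)
    (x : ∀ i, Ω i) : Integrable (fun y => F (S.piecewise y x)) (Measure.pi μ) :=
  memLp_one_iff_integrable.1 (memLp_comp_finsetPiecewise S hF hK x 1)

lemma coordAverage_coordAverage
    (hF : ∀ x, Integrable (fun y => F ((S ∪ T).piecewise y x)) (Measure.pi μ)) :
    coordAverage μ S (coordAverage μ T F) = coordAverage μ (S ∪ T) F := by
  ext x
  have hpiecewise : ∀ y z : ∀ i, Ω i, T.piecewise z (S.piecewise y x) =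
      (S ∪ T).piecewise (T.piecewise z y) x := fun y z => by
    ext i
    by_cases hS : i ∈ S <;> by_cases hT : i ∈ T <;> simp [hS, hT]
  simpa only [coordAverage, hpiecewise] using
    integral_coordAverage (F := fun y => F ((S ∪ T).piecewise y x)) T (hF x)

lemma integral_coordAverage_mul_coordAverage (hST : S ⊆ T) (hF : Measurable F)
    (hK : ∀ x, |F x| ≤ K) :
    ∫ x, coordAverage μ S F x * coordAverage μ T F x ∂Measure.pi μ =
      ∫ x, coordAverage μ T F x ^ 2 ∂Measure.pi μ := by
  have hint : Integrable (coordAverage μ T F * coordAverage μ S F) (Measure.pi μ) :=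
    (memLp_coordAverage T hF hK 2).integrable_mul (memLp_coordAverage S hF hK 2)
  calc ∫ x, coordAverage μ S F x * coordAverage μ T F x ∂Measure.pi μ
      = ∫ x, (coordAverage μ T F * coordAverage μ S F) x ∂Measure.pi μ := by
        simp only [Pi.mul_apply, mul_comm]
    _ = ∫ x, coordAverage μ T (coordAverage μ T F * coordAverage μ S F) x ∂Measure.pi μ :=
        (integral_coordAverage T hint).symm
    _ = ∫ x, coordAverage μ T F x ^ 2 ∂Measure.pi μ := by
        rw [coordAverage_coordAverage_mul,
          coordAverage_coordAverage (integrable_comp_finsetPiecewise _ hF hK),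
          Finset.union_eq_left.2 hST, ← sq]
        rfl

lemma integral_coordAverage_sub_coordAverage_sq (hST : S ⊆ T) (hF : Measurable F)
    (hK : ∀ x, |F x| ≤ K) :
    ∫ x, (coordAverage μ S F x - coordAverage μ T F x) ^ 2 ∂Measure.pi μ =
      ∫ x, coordAverage μ S F x ^ 2 ∂Measure.pi μ -
        ∫ x, coordAverage μ T F x ^ 2 ∂Measure.pi μ := by
  have hS := memLp_coordAverage (μ := μ) S hF hK 2
  have hT := memLp_coordAverage (μ := μ) T hF hK 2
  have hcross : Integrable (fun x => coordAverage μ S F x * coordAverage μ T F x) (Measure.pi μ) :=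
    hS.integrable_mul hT
  have hexpand : ∀ x, (coordAverage μ S F x - coordAverage μ T F x) ^ 2 =
      coordAverage μ S F x ^ 2 - 2 * (coordAverage μ S F x * coordAverage μ T F x) +
        coordAverage μ T F x ^ 2 := fun x => by ring
  simp only [hexpand]
  have hdiff : Integrable (fun x => coordAverage μ S F x ^ 2 -
      2 * (coordAverage μ S F x * coordAverage μ T F x)) (Measure.pi μ) :=
    hS.integrable_sq.sub (hcross.const_mul 2)
  rw [integral_add hdiff hT.integrable_sq,
    integral_sub hS.integrable_sq (hcross.const_mul 2), integral_const_mul,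
    integral_coordAverage_mul_coordAverage hST hF hK]
  ring

lemma antitone_integral_coordAverage_sq (hF : Measurable F) (hK : ∀ x, |F x| ≤ K) :
    Antitone fun S => ∫ x, coordAverage μ S F x ^ 2 ∂Measure.pi μ := fun S T hST => by
  have h : 0 ≤ ∫ x, (coordAverage μ S F x - coordAverage μ T F x) ^ 2 ∂Measure.pi μ :=
    integral_nonneg fun x => sq_nonneg _
  rwa [integral_coordAverage_sub_coordAverage_sq hST hF hK, sub_nonneg] at h

lemma integral_coordAverage_sq_le (S : Finset ι) (hF : Measurable F) (hK : ∀ x, |F x| ≤ K) :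
    ∫ x, coordAverage μ S F x ^ 2 ∂Measure.pi μ ≤ ∫ x, F x ^ 2 ∂Measure.pi μ := by
  simpa only [coordAverage_empty] using
    antitone_integral_coordAverage_sq (μ := μ) hF hK (Finset.empty_subset S)

lemma integral_coordAverage_sq_add_le (S T : Finset ι) (hF : Measurable F)
    (hK : ∀ x, |F x| ≤ K) :
    ∫ x, coordAverage μ S F x ^ 2 ∂Measure.pi μ + ∫ x, coordAverage μ T F x ^ 2 ∂Measure.pi μ ≤
      ∫ x, coordAverage μ (S ∪ T) F x ^ 2 ∂Measure.pi μ +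
        ∫ x, coordAverage μ (S ∩ T) F x ^ 2 ∂Measure.pi μ := by
  have hmeas := fun U => measurable_coordAverage (μ := μ) U hF
  have hbound := fun U => abs_coordAverage_le (μ := μ) U hK
  set D := coordAverage μ (S ∩ T) F - coordAverage μ S F with hD
  have hDm : Measurable D := (hmeas _).sub (hmeas _)
  have hDK : ∀ x, |D x| ≤ K + K := fun x =>
    (abs_sub _ _).trans (add_le_add (hbound _ x) (hbound _ x))
  have hTD : ∀ x, coordAverage μ T D x = coordAverage μ T F x - coordAverage μ (S ∪ T) F x := by
    have hav : ∀ U, coordAverage μ T (coordAverage μ U F) = coordAverage μ (T ∪ U) F := fun U =>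
      coordAverage_coordAverage (integrable_comp_finsetPiecewise _ hF hK)
    have hint := fun U => integrable_comp_finsetPiecewise (μ := μ) T (hmeas U) (hbound U)
    intro x
    calc coordAverage μ T D x
        = coordAverage μ T (coordAverage μ (S ∩ T) F) x -
            coordAverage μ T (coordAverage μ S F) x := integral_sub (hint _ x) (hint _ x)
      _ = coordAverage μ T F x - coordAverage μ (S ∪ T) F x := by
        rw [hav, hav, Finset.union_eq_left.2 Finset.inter_subset_right, Finset.union_comm T S]
  have hcontract := integral_coordAverage_sq_le (μ := μ) T hDm hDK
  simp only [hTD] at hcontract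
  simp only [hD, Pi.sub_apply] at hcontract
  rw [integral_coordAverage_sub_coordAverage_sq Finset.subset_union_right hF hK,
    integral_coordAverage_sub_coordAverage_sq Finset.inter_subset_left hF hK] at hcontract
  linarith

lemma expCondVar_eq_ofReal (S : Finset ι) (hF : Measurable F) (hK : ∀ x, |F x| ≤ K) :
    expCondVar μ S F = ENNReal.ofReal
      (∫ x, F x ^ 2 ∂Measure.pi μ - ∫ x, coordAverage μ S F x ^ 2 ∂Measure.pi μ) := by
  have hF2 : MemLp F 2 (Measure.pi μ) := .of_bound hF.aestronglyMeasurable K (.of_forall hK)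
  have hsection : ∀ x, MemLp (fun y => F (S.piecewise y x)) 2 (Measure.pi μ) := fun x =>
    memLp_comp_finsetPiecewise S hF hK x 2
  have hvar : ∀ x, variance (fun y => F (S.piecewise y x)) (Measure.pi μ) =
      coordAverage μ S (fun y => F y ^ 2) x - coordAverage μ S F x ^ 2 := fun x =>
    variance_eq_sub (hsection x)
  have hint : Integrable (coordAverage μ S fun y => F y ^ 2) (Measure.pi μ) :=
    memLp_one_iff_integrable.1 <| memLp_coordAverage S (by fun_prop)
      (fun x => (abs_pow (F x) 2).trans_le (pow_le_pow_left₀ (abs_nonneg _) (hK x) 2)) 1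
  have hint' := (memLp_coordAverage (μ := μ) S hF hK 2).integrable_sq
  calc expCondVar μ S F
      = ∫⁻ x, ENNReal.ofReal (coordAverage μ S (fun y => F y ^ 2) x - coordAverage μ S F x ^ 2)
          ∂Measure.pi μ := by
        simp only [expCondVar, ← ofReal_variance (hsection _), hvar]
    _ = ENNReal.ofReal (∫ x, coordAverage μ S (fun y => F y ^ 2) x - coordAverage μ S F x ^ 2
          ∂Measure.pi μ) :=
        (ofReal_integral_eq_lintegral_ofReal (hint.sub hint')
          (.of_forall fun x => (variance_nonneg _ _).trans_eq (hvar x))).symm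
    _ = ENNReal.ofReal
          (∫ x, F x ^ 2 ∂Measure.pi μ - ∫ x, coordAverage μ S F x ^ 2 ∂Measure.pi μ) := by
        rw [integral_sub hint hint', integral_coordAverage S hF2.integrable_sq]

lemma evariance_le_sum_mul_expCondVar_of_abs_le {𝒞 : Finset (Finset ι)} {w : Finset ι → ℝ≥0}
    (hcover : ∀ i, 1 ≤ ∑ S ∈ 𝒞 with i ∈ S, w S) (hF : Measurable F) (hK : ∀ x, |F x| ≤ K) :
    evariance F (Measure.pi μ) ≤ ∑ S ∈ 𝒞, w S * expCondVar μ S F := by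
  let g : Finset ι → ℝ := fun S =>
    ∫ x, F x ^ 2 ∂Measure.pi μ - ∫ x, coordAverage μ S F x ^ 2 ∂Measure.pi μ
  have hmono : Monotone g := fun S T hST =>
    sub_le_sub_left (antitone_integral_coordAverage_sq hF hK hST) _
  have hsub : ∀ S T, g (S ∪ T) + g (S ∩ T) ≤ g S + g T := fun S T => by
    linarith [integral_coordAverage_sq_add_le (μ := μ) S T hF hK]
  have hempty : g ∅ = 0 := by simp only [g, coordAverage_empty, sub_self]
  have hnonneg : ∀ S, 0 ≤ g S := fun S => hempty ▸ hmono (Finset.empty_subset S)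
  have hshearer : g Finset.univ ≤ ∑ S ∈ 𝒞, w S * g S := by
    simpa only [Finset.inter_univ] using
      le_sum_mul_inter_of_submodular hmono hsub hempty (fun S _ => (w S).coe_nonneg) Finset.univ
        fun i _ => by exact_mod_cast hcover i
  calc evariance F (Measure.pi μ) = ENNReal.ofReal (g Finset.univ) :=
        expCondVar_univ.symm.trans (expCondVar_eq_ofReal _ hF hK)
    _ ≤ ENNReal.ofReal (∑ S ∈ 𝒞, w S * g S) := ENNReal.ofReal_le_ofReal hshearer
    _ = ∑ S ∈ 𝒞, w S * expCondVar μ S F := by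
        rw [ENNReal.ofReal_sum_of_nonneg fun S _ => mul_nonneg (w S).coe_nonneg (hnonneg S)]
        refine Finset.sum_congr rfl fun S _ => ?_
        rw [ENNReal.ofReal_mul (w S).coe_nonneg, ENNReal.ofReal_coe_nnreal,
          expCondVar_eq_ofReal S hF hK]

lemma expCondVar_comp_le_of_lipschitzWith {φ : ℝ → ℝ} {K : ℝ≥0} (hφ : LipschitzWith K φ)
    (S : Finset ι) (hF : Measurable F) :
    expCondVar μ S (φ ∘ F) ≤ K ^ 2 * expCondVar μ S F := by
  rw [expCondVar, expCondVar, ← lintegral_const_mul' _ _ (by simp)]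
  exact lintegral_mono fun x => evariance_comp_le_of_lipschitzWith hφ
    (Measurable.aestronglyMeasurable (by fun_prop))

lemma evariance_le_sum_mul_expCondVar {𝒞 : Finset (Finset ι)} {w : Finset ι → ℝ≥0}
    (hcover : ∀ i, 1 ≤ ∑ S ∈ 𝒞 with i ∈ S, w S) (hF : Measurable F) :
    evariance F (Measure.pi μ) ≤ ∑ S ∈ 𝒞, w S * expCondVar μ S F := by
  let clamp : ℕ → ℝ → ℝ := fun N a => max (-N) (min a N)
  have hlip : ∀ N, LipschitzWith 1 (clamp N) := fun N =>
    (LipschitzWith.id.min_const (N : ℝ)).const_max (-N : ℝ)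
  have hmeas : ∀ N, Measurable (clamp N ∘ F) := fun N => (hlip N).continuous.measurable.comp hF
  have hbound : ∀ N x, |(clamp N ∘ F) x| ≤ N := fun N x =>
    abs_le.2 ⟨le_max_left _ _, max_le (neg_le_self N.cast_nonneg) (min_le_right _ _)⟩
  have hlim : ∀ x, Tendsto (fun N => (clamp N ∘ F) x) atTop (𝓝 (F x)) := fun x => by
    obtain ⟨N₀, hN₀⟩ := exists_nat_ge |F x|
    refine tendsto_const_nhds.congr' ?_
    filter_upwards [eventually_ge_atTop N₀] with N hN
    have hFN := abs_le.1 (hN₀.trans (Nat.cast_le.2 hN))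
    simp only [Function.comp_apply, clamp, min_eq_left hFN.2, max_eq_right hFN.1]
  calc evariance F (Measure.pi μ)
      ≤ liminf (fun N => evariance (clamp N ∘ F) (Measure.pi μ)) atTop :=
        evariance_le_liminf (fun N => (hmeas N).aestronglyMeasurable) (.of_forall hlim)
    _ ≤ ∑ S ∈ 𝒞, w S * expCondVar μ S F := by
        refine liminf_le_of_frequently_le' (Eventually.of_forall fun N => ?_).frequently
        refine (evariance_le_sum_mul_expCondVar_of_abs_le hcover (hmeas N) (hbound N)).trans ?_
        gcongr with S
        simpa using expCondVar_comp_le_of_lipschitzWith (hlip N) S hF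

end ProductMeasure

section DirichletEnergy

variable {H : Type*} [NormedAddCommGroup H] [InnerProductSpace ℝ H] [CompleteSpace H]

lemma gradient_comp_add_left (f : H → ℝ) (a x : H) :
    gradient (fun z => f (a + z)) x = gradient f (a + x) := by
  rw [gradient, gradient, fderiv_comp_add_left]

variable [MeasurableSpace H] [BorelSpace H]

@[fun_prop]
lemma measurable_gradient (f : H → ℝ) : Measurable (gradient f) :=
  (InnerProductSpace.toDual ℝ H).symm.continuous.measurable.comp (measurable_fderiv ℝ f)

/-- The Dirichlet energy `∫ |∇f|² dμ`, the right-hand side of a Poincaré inequality. -/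
noncomputable def dirichletEnergy (f : H → ℝ) (μ : Measure H) : ℝ≥0∞ :=
  ∫⁻ x, ‖gradient f x‖₊ ^ 2 ∂μ

end DirichletEnergy

section PoincareConst

variable {d : ℕ} {μ : Measure (EuclideanSpace ℝ (Fin d))} {f : EuclideanSpace ℝ (Fin d) → ℝ}

lemma poincareConst_le {C : ℝ≥0∞} (hC : ∀ f, LocallyLipschitz f → dirichletEnergy f μ ≠ ∞ →
    evariance f μ ≤ C * dirichletEnergy f μ) : poincareConst μ ≤ C := by
  refine le_of_forall_gt_imp_ge_of_dense fun C' hC' => sInf_le fun f hf => ?_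
  change evariance f μ ≤ C' * dirichletEnergy f μ
  by_cases hfin : dirichletEnergy f μ = ∞
  · rw [hfin, ENNReal.mul_top (bot_le.trans_lt hC').ne']
    exact le_top
  · exact (hC f hf hfin).trans (by gcongr)

lemma evariance_le_poincareConst_mul (hμ : poincareConst μ ≠ ∞) (hf : LocallyLipschitz f)
    (hfin : dirichletEnergy f μ ≠ ∞) :
    evariance f μ ≤ poincareConst μ * dirichletEnergy f μ := by
  by_cases hzero : dirichletEnergy f μ = 0
  · obtain ⟨C, hC, -⟩ := sInf_lt_iff.1 (lt_top_iff_ne_top.2 hμ)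
    have h : evariance f μ ≤ C * dirichletEnergy f μ := hC f hf
    simpa [hzero] using h
  · rw [← ENNReal.div_le_iff hzero hfin]
    exact le_sInf fun C hC => (ENNReal.div_le_iff hzero hfin).2 (hC f hf)

end PoincareConst

lemma sum_piecewise_eq_compl_add {ι M : Type*} [Fintype ι] [DecidableEq ι] [AddCommMonoid M]
    (S : Finset ι) (x y : ι → M) :
    ∑ i, S.piecewise y x i = ∑ i ∈ Sᶜ, x i + ∑ i ∈ S, y i := by
  rw [Finset.sum_piecewise, Finset.univ_inter, ← Finset.compl_eq_univ_sdiff, add_comm]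

section Convolution

variable {d n : ℕ} {μs : Fin n → Measure (EuclideanSpace ℝ (Fin d))}
  {f : EuclideanSpace ℝ (Fin d) → ℝ}

lemma expCondVar_comp_sum (S : Finset (Fin n)) (hf : Measurable f) :
    expCondVar μs S (fun x => f (∑ i, x i)) =
      ∫⁻ x, evariance (fun z => f (∑ i ∈ Sᶜ, x i + z)) (convOver μs S) ∂Measure.pi μs := by
  refine lintegral_congr fun x => ?_
  rw [convOver, evariance_map (Measurable.aestronglyMeasurable (by fun_prop)) (by fun_prop)]
  simp only [sum_piecewise_eq_compl_add, Function.comp_def]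

variable [∀ i, IsProbabilityMeasure (μs i)]

lemma lintegral_lintegral_convOver (S : Finset (Fin n)) {h : EuclideanSpace ℝ (Fin d) → ℝ≥0∞}
    (hh : Measurable h) :
    ∫⁻ x, ∫⁻ z, h (∑ i ∈ Sᶜ, x i + z) ∂convOver μs S ∂Measure.pi μs =
      ∫⁻ z, h z ∂convOver μs Finset.univ := by
  have hslice : ∀ x : Fin n → EuclideanSpace ℝ (Fin d),
      ∫⁻ z, h (∑ i ∈ Sᶜ, x i + z) ∂convOver μs S =
        ∫⁻ y, h (∑ i, S.piecewise y x i) ∂Measure.pi μs := fun x => by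
    rw [convOver, lintegral_map (by fun_prop) (by fun_prop)]
    simp only [sum_piecewise_eq_compl_add]
  simp only [hslice]
  rw [convOver, lintegral_map hh (by fun_prop)]
  exact lintegral_lintegral_finsetPiecewise μs S (H := fun x => h (∑ i, x i)) (by fun_prop)

lemma dirichletEnergy_convOver_univ (S : Finset (Fin n)) (f : EuclideanSpace ℝ (Fin d) → ℝ) :
    dirichletEnergy f (convOver μs Finset.univ) =
      ∫⁻ x, dirichletEnergy (fun z => f (∑ i ∈ Sᶜ, x i + z)) (convOver μs S) ∂Measure.pi μs := by
  simp only [dirichletEnergy, gradient_comp_add_left]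
  exact (lintegral_lintegral_convOver S (h := fun z => ‖gradient f z‖₊ ^ 2) (by fun_prop)).symm

lemma expCondVar_comp_sum_le {S : Finset (Fin n)} (hS : poincareConst (convOver μs S) ≠ ∞)
    (hf : LocallyLipschitz f) (hfin : dirichletEnergy f (convOver μs Finset.univ) ≠ ∞) :
    expCondVar μs S (fun x => f (∑ i, x i)) ≤
      poincareConst (convOver μs S) * dirichletEnergy f (convOver μs Finset.univ) := by
  have hlip (a : EuclideanSpace ℝ (Fin d)) : LocallyLipschitz fun z => f (a + z) :=
    hf.comp (isometry_add_left a).lipschitz.locallyLipschitz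
  rw [dirichletEnergy_convOver_univ S] at hfin ⊢
  rw [expCondVar_comp_sum S hf.continuous.measurable, ← lintegral_const_mul' _ _ hS]
  have henergy : Measurable fun x : Fin n → EuclideanSpace ℝ (Fin d) =>
      dirichletEnergy (fun z => f (∑ i ∈ Sᶜ, x i + z)) (convOver μs S) := by
    simp only [dirichletEnergy, gradient_comp_add_left]
    have : SFinite (convOver μs S) := inferInstanceAs (SFinite (Measure.map _ _))
    exact Measurable.lintegral_prod_right (by fun_prop)
  refine lintegral_mono_ae ?_
  filter_upwards [ae_lt_top henergy hfin] with x hx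
  exact evariance_le_poincareConst_mul hS (hlip _) hx.ne

end Convolution

lemma one_le_sum_inv_of_eq_iInf_card {ι : Type*} [DecidableEq ι] {𝒞 : Finset (Finset ι)} {t : ℕ}
    (ht : t = ⨅ i, (𝒞.filter fun S => i ∈ S).card) (ht1 : 1 ≤ t) (i : ι) :
    1 ≤ ∑ S ∈ 𝒞 with i ∈ S, (t : ℝ≥0)⁻¹ := by
  have hti : t ≤ (𝒞.filter fun S => i ∈ S).card := ht ▸ ciInf_le (OrderBot.bddBelow _) i
  rw [Finset.sum_const, nsmul_eq_mul, ← div_eq_mul_inv, one_le_div₀ (by positivity)]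
  exact_mod_cast hti

theorem poincareConst_conv_shearer_general {d n : ℕ}
    (μs : Fin n → Measure (EuclideanSpace ℝ (Fin d))) [∀ i, IsProbabilityMeasure (μs i)]
    (𝒞 : Finset (Finset (Fin n))) (w : Finset (Fin n) → ℝ≥0)
    (hw : ∀ i, 1 ≤ ∑ S ∈ 𝒞 with i ∈ S, w S) :
    poincareConst (convOver μs Finset.univ) ≤ ∑ S ∈ 𝒞, w S * poincareConst (convOver μs S) := by
  by_cases htop : ∑ S ∈ 𝒞, w S * poincareConst (convOver μs S) = ∞
  · exact htop ▸ le_top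
  have hterm : ∀ S ∈ 𝒞, w S * poincareConst (convOver μs S) ≠ ∞ := fun S hS hSinf =>
    htop (ENNReal.sum_eq_top.2 ⟨S, hS, hSinf⟩)
  refine poincareConst_le fun f hf hfin => ?_
  have hfm : Measurable f := hf.continuous.measurable
  calc evariance f (convOver μs Finset.univ)
      = evariance (fun x => f (∑ i, x i)) (Measure.pi μs) :=
        evariance_map hfm.aestronglyMeasurable (by fun_prop)
    _ ≤ ∑ S ∈ 𝒞, w S * expCondVar μs S (fun x => f (∑ i, x i)) :=
        evariance_le_sum_mul_expCondVar hw (by fun_prop)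
    _ ≤ ∑ S ∈ 𝒞, w S * (poincareConst (convOver μs S) *
          dirichletEnergy f (convOver μs Finset.univ)) := by
        refine Finset.sum_le_sum fun S hS => ?_
        by_cases hwS : w S = 0
        · simp [hwS]
        · gcongr
          exact expCondVar_comp_sum_le
            (fun h => hterm S hS (by simp [h, hwS])) hf hfin
    _ = (∑ S ∈ 𝒞, w S * poincareConst (convOver μs S)) *
          dirichletEnergy f (convOver μs Finset.univ) := by
        simp only [Finset.sum_mul, mul_assoc]

/-- Shearer-type inequality for the Poincaré constant of convolutions: for any collection `𝒞`
of distinct subsets of `[n]` with `t := min_{i ∈ [n]} #{S ∈ 𝒞 : i ∈ S} ≥ 1`,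
`C_p(μ_{[n]}) ≤ (1/t) ∑_{S ∈ 𝒞} C_p(μ_S)`. -/
theorem poincareConst_conv_shearer {d n : ℕ}
    (μs : Fin n → Measure (EuclideanSpace ℝ (Fin d))) [∀ i, IsProbabilityMeasure (μs i)]
    (𝒞 : Finset (Finset (Fin n))) (t : ℕ)
    (ht : t = ⨅ i : Fin n, (𝒞.filter fun S => i ∈ S).card) (ht1 : 1 ≤ t) :
    poincareConst (convOver μs Finset.univ) ≤
      (1 / (t : ℝ≥0∞)) * ∑ S ∈ 𝒞, poincareConst (convOver μs S) := by
  have hw := one_le_sum_inv_of_eq_iInf_card ht ht1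
  have ht0 : (t : ℝ≥0) ≠ 0 := Nat.cast_ne_zero.2 (Nat.one_le_iff_ne_zero.1 ht1)
  simpa [Finset.mul_sum, ENNReal.coe_inv ht0] using poincareConst_conv_shearer_general μs 𝒞 _ hw
end

section
/- Let (X_i) be i.i.d. random vectors in ℝ^d with law ν_1, and for n ≥ 1 let ν_n denote the law of the standardized sum (1/√n) Σ_{i=1}^n X_i. Then for every n ≥ 2, C_p(ν_n) ≤ C_p(ν_{n−1}); that is, the Poincaré constant is non-increasing along the central limit theorem. -/
open MeasureTheory ProbabilityTheory ENNReal

/-- The law of the standardized sum `(1/√n) ∑_{i=1}^n X_i` of `n` i.i.d. random vectors with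
common law `ν₁`. -/
noncomputable def stdSumLaw {d : ℕ} (ν₁ : Measure (EuclideanSpace ℝ (Fin d))) (n : ℕ) :
    Measure (EuclideanSpace ℝ (Fin d)) :=
  Measure.map (fun x : Fin n → EuclideanSpace ℝ (Fin d) => (Real.sqrt n)⁻¹ • ∑ i, x i)
    (Measure.pi fun _ : Fin n => ν₁)

/-!
Let `S = ∑ i, X i` be a sum of `n` independent random vectors and `F = f S`. If `G i` is the average
of `F` over all the summands but `X i`, then the `G i` are independent, so expanding squares gives
`∑ i, Var(F - G i) = (n - 1) Var F + Var(F - ∑ i, G i) ≥ (n - 1) Var F`. For a fixed value of `X i`,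
`F - G i` is a centred function of the leave-one-out sum `S - X i`, so if the law of `S - X i` has
Poincaré constant `C i`, then `Var(F - G i) ≤ C i * E|∇f(S)|²`. Hence the law of `S` has a Poincaré
constant at most `(∑ i, C i) / (n - 1)`. For i.i.d. summands the scaling `C_p(a • X) = a² C_p(X)`
turns this into monotonicity along standardized sums.
-/

section Variance

variable {Ω : Type*} [MeasurableSpace Ω] {P : Measure Ω}

lemma evariance_map_s4 {Ω' : Type*} [MeasurableSpace Ω'] {T : Ω → Ω'} {f : Ω' → ℝ}
    (hf : AEMeasurable f (P.map T)) (hT : AEMeasurable T P) : eVar[f; P.map T] = eVar[f ∘ T; P] :=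
  IdentDistrib.evariance_eq
    ⟨hf, hf.comp_aemeasurable hT, AEMeasurable.map_map_of_aemeasurable hf hT⟩

lemma evariance_le_lintegral_enorm_sq [IsProbabilityMeasure P] {X : Ω → ℝ}
    (hX : AEStronglyMeasurable X P) : eVar[X; P] ≤ ∫⁻ ω, ‖X ω‖ₑ ^ 2 ∂P :=
  (evariance_def' hX).trans_le tsub_le_self

lemma evariance_sub_integral_prodMk_le {α β : Type*} [MeasurableSpace α] [MeasurableSpace β]
    {μ : Measure α} {ν : Measure β} [IsProbabilityMeasure μ] [IsProbabilityMeasure ν]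
    {h : α × β → ℝ} (hh : Measurable h) :
    eVar[fun p => h p - ∫ y, h (p.1, y) ∂ν; μ.prod ν] ≤ ∫⁻ x, eVar[fun y => h (x, y); ν] ∂μ := by
  have hmeas : Measurable fun p => h p - ∫ y, h (p.1, y) ∂ν :=
    hh.sub (hh.stronglyMeasurable.integral_prod_right'.measurable.comp measurable_fst)
  -- A non-integrable slice has Bochner integral `0` on both sides.
  refine (evariance_le_lintegral_enorm_sq hmeas.aestronglyMeasurable).trans_eq ?_
  exact lintegral_prod _ (hmeas.enorm.pow_const 2).aemeasurable

lemma ae_memLp_prodMk_right {α β E : Type*} [MeasurableSpace α] [MeasurableSpace β]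
    [NormedAddCommGroup E] {μ : Measure α} {ν : Measure β} [SFinite μ] [SFinite ν] {p : ℝ≥0∞}
    (hp₀ : p ≠ 0) (hp : p ≠ ∞) {f : α × β → E} (hf : MemLp f p (μ.prod ν)) :
    ∀ᵐ y ∂ν, MemLp (fun x => f (x, y)) p μ := by
  filter_upwards [hf.aestronglyMeasurable.prodMk_right,
    (hf.integrable_norm_rpow hp₀ hp).prod_left_ae] with y hmeas hint
  exact (integrable_norm_rpow_iff hmeas hp₀ hp).mp hint

lemma memLp_left_of_memLp_sub_of_indepFun {E : Type*} [NormedAddCommGroup E] [MeasurableSpace E]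
    [BorelSpace E] [SecondCountableTopology E] [IsProbabilityMeasure P] {p : ℝ≥0∞} (hp₀ : p ≠ 0)
    (hp : p ≠ ∞) {X Y : Ω → E} (hX : AEMeasurable X P) (hY : AEMeasurable Y P)
    (hXY : X ⟂ᵢ[P] Y) (h : MemLp (X - Y) p P) : MemLp X p P := by
  have := Measure.isProbabilityMeasure_map hY
  have hprod : MemLp (fun q : E × E => q.1 - q.2) p ((P.map X).prod (P.map Y)) := by
    rw [← hXY.map_prod_eq_prod_map_map hX hY]
    exact (memLp_map_measure_iff (by fun_prop) (hX.prodMk hY)).mpr h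
  obtain ⟨y, hy⟩ := (ae_memLp_prodMk_right hp₀ hp hprod).exists
  have hXy : MemLp (fun ω => X ω - y) p P := hy.comp_of_map hX
  simpa [Pi.add_def] using hXy.add (memLp_const y)

variable {ι : Type*} [Fintype ι] {F : Ω → ℝ} {Z : ι → Ω → ℝ}

lemma card_sub_one_mul_variance_le_sum_variance_sub [IsFiniteMeasure P] (hF : MemLp F 2 P)
    (hZ : ∀ i, MemLp (Z i) 2 P) (hcov : Pairwise fun i j => cov[Z i, Z j; P] = 0) :
    (Fintype.card ι - 1) * Var[F; P] ≤ ∑ i, Var[F - Z i; P] := by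
  have hsum : Var[∑ i, Z i; P] = ∑ i, Var[Z i; P] := by
    rw [variance_sum hZ]
    refine Finset.sum_congr rfl fun i _ => ?_
    rw [Finset.sum_eq_single i (fun j _ hj => hcov hj.symm) (by simp),
      covariance_self (hZ i).aemeasurable]
  have hdefect :
      ∑ i, Var[F - Z i; P] = (Fintype.card ι - 1) * Var[F; P] + Var[F - ∑ i, Z i; P] := by
    simp_rw [variance_sub hF (hZ _)]
    rw [variance_sub hF (memLp_finsetSum' _ fun i _ => hZ i), hsum, covariance_sum_right hZ hF]
    simp only [Finset.sum_add_distrib, Finset.sum_sub_distrib, Finset.sum_const, Finset.card_univ,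
      nsmul_eq_mul, ← Finset.mul_sum]
    ring
  linarith [variance_nonneg (F - ∑ i, Z i) P]

lemma card_sub_one_mul_evariance_le_sum_evariance_sub [IsProbabilityMeasure P]
    (hF : AEMeasurable F P) (hZ : ∀ i, AEMeasurable (Z i) P)
    (hind : Pairwise fun i j => Z i ⟂ᵢ[P] Z j) :
    (Fintype.card ι - 1 : ℕ) * eVar[F; P] ≤ ∑ i, eVar[F - Z i; P] := by
  rcases subsingleton_or_nontrivial ι with _ | _
  · simp [Nat.sub_eq_zero_of_le (Fintype.card_le_one_iff_subsingleton.mpr ‹_›)]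
  -- If the right-hand side is finite, then `Z i - Z j` is in `L²`, so by independence `Z i` is too.
  by_cases hsub : ∀ i, MemLp (F - Z i) 2 P
  · have hZL (i : ι) : MemLp (Z i) 2 P := by
      obtain ⟨j, hji⟩ := exists_ne i
      refine memLp_left_of_memLp_sub_of_indepFun two_ne_zero ofNat_ne_top (hZ i) (hZ j)
        (hind hji.symm) ?_
      simpa using (hsub j).sub (hsub i)
    have hFL : MemLp F 2 P := by
      obtain ⟨i⟩ : Nonempty ι := inferInstance
      simpa using (hsub i).add (hZL i)
    have hreal := card_sub_one_mul_variance_le_sum_variance_sub hFL hZL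
      fun i j hij => (hind hij).covariance_eq_zero (hZL i) (hZL j)
    simp_rw [← ofReal_variance hFL, ← ofReal_variance (hsub _)]
    rw [← ENNReal.ofReal_sum_of_nonneg fun i _ => variance_nonneg _ _, ← ENNReal.ofReal_natCast,
      ← ENNReal.ofReal_mul (Nat.cast_nonneg _), Nat.cast_pred Fintype.card_pos]
    exact ENNReal.ofReal_le_ofReal hreal
  · obtain ⟨i, hi⟩ := not_forall.mp hsub
    have htop : eVar[F - Z i; P] = ∞ := evariance_eq_top (hF.sub (hZ i)).aestronglyMeasurable hi
    have hsum : ∑ i, eVar[F - Z i; P] = ∞ := sum_eq_top.mpr ⟨i, Finset.mem_univ i, htop⟩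
    exact hsum ▸ le_top

lemma card_sub_one_mul_evariance_le_sum_lintegral_evariance [IsProbabilityMeasure P]
    {α β : ι → Type*} [∀ i, MeasurableSpace (α i)] [∀ i, MeasurableSpace (β i)] {X : ∀ i, Ω → α i}
    {W : ∀ i, Ω → β i} {h : ∀ i, α i × β i → ℝ} (hX : ∀ i, AEMeasurable (X i) P)
    (hW : ∀ i, AEMeasurable (W i) P) (hh : ∀ i, Measurable (h i))
    (hXX : Pairwise fun i j => X i ⟂ᵢ[P] X j) (hXW : ∀ i, X i ⟂ᵢ[P] W i) (hF : AEMeasurable F P)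
    (hFh : ∀ i ω, F ω = h i (X i ω, W i ω)) :
    (Fintype.card ι - 1 : ℕ) * eVar[F; P] ≤
      ∑ i, ∫⁻ x, eVar[fun y => h i (x, y); P.map (W i)] ∂P.map (X i) := by
  have hG (i : ι) : Measurable fun x => ∫ y, h i (x, y) ∂P.map (W i) :=
    (hh i).stronglyMeasurable.integral_prod_right'.measurable
  refine (card_sub_one_mul_evariance_le_sum_evariance_sub
    (Z := fun i ω => ∫ y, h i (X i ω, y) ∂P.map (W i)) hF (fun i => (hG i).comp_aemeasurable (hX i))
    fun i j hij => (hXX hij).comp (hG i) (hG j)).trans ?_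
  refine Finset.sum_le_sum fun i _ => ?_
  have := Measure.isProbabilityMeasure_map (hX i)
  have := Measure.isProbabilityMeasure_map (hW i)
  refine le_trans (le_of_eq ?_) (evariance_sub_integral_prodMk_le (hh i))
  rw [← (hXW i).map_prod_eq_prod_map_map (hX i) (hW i), evariance_map_s4 _ ((hX i).prodMk (hW i))]
  · congr 1 with ω
    simp [hFh i]
  · exact ((hh i).sub ((hG i).comp measurable_fst)).aemeasurable

end Variance

section Gradient

variable {E : Type*} [NormedAddCommGroup E] [InnerProductSpace ℝ E] [CompleteSpace E]

lemma nnnorm_gradient (f : E → ℝ) (x : E) : ‖gradient f x‖₊ = ‖fderiv ℝ f x‖₊ := by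
  simp [gradient]

lemma nnnorm_gradient_comp_const_add (f : E → ℝ) (b x : E) :
    ‖gradient (fun y => f (b + y)) x‖₊ = ‖gradient f (b + x)‖₊ := by
  rw [nnnorm_gradient, nnnorm_gradient, fderiv_comp_add_left]

lemma nnnorm_gradient_comp_const_smul (f : E → ℝ) (a : ℝ) (x : E) :
    ‖gradient (fun y => f (a • y)) x‖₊ = ‖a‖₊ * ‖gradient f (a • x)‖₊ := by
  rw [nnnorm_gradient, nnnorm_gradient, fderiv_comp_smul, nnnorm_smul]

lemma measurable_nnnorm_gradient [MeasurableSpace E] [BorelSpace E] (f : E → ℝ) :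
    Measurable fun x => ‖gradient f x‖₊ := by
  simp_rw [nnnorm_gradient]
  exact (measurable_fderiv ℝ f).nnnorm

lemma measurable_nnnorm_gradient_sq [MeasurableSpace E] [BorelSpace E] (f : E → ℝ) :
    Measurable fun x => (‖gradient f x‖₊ : ℝ≥0∞) ^ 2 :=
  (measurable_nnnorm_gradient f).coe_nnreal_ennreal.pow_const 2

end Gradient

section Poincare

variable {E : Type*} [NormedAddCommGroup E] [InnerProductSpace ℝ E] [CompleteSpace E]
  [MeasurableSpace E]

/-- The Poincaré inequality for `μ` with constant `C`. As in `poincareConst`, the constant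
`C = ∞` is allowed, with the convention `∞ * 0 = 0`, and `gradient f x = 0` wherever `f` is not
differentiable. -/
def PoincareInequality (μ : Measure E) (C : ℝ≥0∞) : Prop :=
  ∀ f : E → ℝ, LocallyLipschitz f → eVar[f; μ] ≤ C * ∫⁻ x, ‖gradient f x‖₊ ^ 2 ∂μ

namespace PoincareInequality

variable [BorelSpace E] {μ ν : Measure E} {C : ℝ≥0∞}

lemma map_const_smul (hμ : PoincareInequality μ C) (a : ℝ) :
    PoincareInequality (μ.map (a • ·)) (‖a‖ₑ ^ 2 * C) := fun f hf => by
  have ha : Measurable fun x : E => a • x := measurable_const_smul a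
  have hgrad : Measurable fun x => (‖gradient f (a • x)‖₊ : ℝ≥0∞) ^ 2 :=
    (measurable_nnnorm_gradient_sq f).comp ha
  calc eVar[f; μ.map (a • ·)]
      = eVar[fun x => f (a • x); μ] :=
        evariance_map_s4 hf.continuous.measurable.aemeasurable ha.aemeasurable
    _ ≤ C * ∫⁻ x, ‖gradient (fun y => f (a • y)) x‖₊ ^ 2 ∂μ :=
        hμ _ (hf.comp (lipschitzWith_smul a).locallyLipschitz)
    _ = C * (‖a‖ₑ ^ 2 * ∫⁻ x, ‖gradient f (a • x)‖₊ ^ 2 ∂μ) := by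
        simp_rw [nnnorm_gradient_comp_const_smul, ENNReal.coe_mul, mul_pow]
        rw [lintegral_const_mul _ hgrad, enorm_eq_nnnorm]
    _ = ‖a‖ₑ ^ 2 * C * ∫⁻ x, ‖gradient f x‖₊ ^ 2 ∂μ.map (a • ·) := by
        rw [lintegral_map (measurable_nnnorm_gradient_sq f) ha]
        ring

lemma lintegral_evariance_le_conv [SecondCountableTopology E] [SFinite ν]
    (hν : PoincareInequality ν C) (μ : Measure E) [SFinite μ] {f : E → ℝ}
    (hf : LocallyLipschitz f) :
    ∫⁻ x, eVar[fun y => f (x + y); ν] ∂μ ≤ C * ∫⁻ z, ‖gradient f z‖₊ ^ 2 ∂(μ ∗ ν) := by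
  have hgrad : Measurable fun p : E × E => (‖gradient f (p.1 + p.2)‖₊ : ℝ≥0∞) ^ 2 :=
    (measurable_nnnorm_gradient_sq f).comp measurable_add
  have hslice (x : E) :
      eVar[fun y => f (x + y); ν] ≤ C * ∫⁻ y, ‖gradient f (x + y)‖₊ ^ 2 ∂ν := by
    simpa only [nnnorm_gradient_comp_const_add] using
      hν (fun y => f (x + y)) (hf.comp (isometry_add_left x).lipschitz.locallyLipschitz)
  calc ∫⁻ x, eVar[fun y => f (x + y); ν] ∂μ
      ≤ ∫⁻ x, C * ∫⁻ y, ‖gradient f (x + y)‖₊ ^ 2 ∂ν ∂μ := lintegral_mono hslice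
    _ = C * ∫⁻ z, ‖gradient f z‖₊ ^ 2 ∂(μ ∗ ν) := by
        rw [lintegral_const_mul _ hgrad.lintegral_prod_right',
          Measure.lintegral_conv (measurable_nnnorm_gradient_sq f)]

section Sum

variable [SecondCountableTopology E] {Ω ι : Type*} [MeasurableSpace Ω] [Fintype ι] [DecidableEq ι]
  {P : Measure Ω} {X : ι → Ω → E} {C : ι → ℝ≥0∞}

lemma card_sub_one_mul_evariance_map_sum_le (hX : ∀ i, Measurable (X i)) (hind : iIndepFun X P)
    (hC : ∀ i, PoincareInequality (P.map (∑ j ∈ {i}ᶜ, X j)) (C i)) {f : E → ℝ}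
    (hf : LocallyLipschitz f) :
    (Fintype.card ι - 1 : ℕ) * eVar[f; P.map (∑ i, X i)] ≤
      (∑ i, C i) * ∫⁻ x, ‖gradient f x‖₊ ^ 2 ∂P.map (∑ i, X i) := by
  have := hind.isProbabilityMeasure
  have hfm : Measurable f := hf.continuous.measurable
  have hS : Measurable (∑ i, X i) := by fun_prop
  have hW (i : ι) : Measurable (∑ j ∈ {i}ᶜ, X j) := by fun_prop
  have hXW (i : ι) : X i ⟂ᵢ[P] ∑ j ∈ {i}ᶜ, X j :=
    (hind.indepFun_finsetSum_of_notMem hX (by simp)).symm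
  have hsplit (i : ι) : ∑ j, X j = X i + ∑ j ∈ {i}ᶜ, X j := Fintype.sum_eq_add_sum_compl i X
  have hconv (i : ι) : P.map (∑ j, X j) = P.map (X i) ∗ P.map (∑ j ∈ {i}ᶜ, X j) := by
    rw [hsplit i, (hXW i).map_add_eq_map_conv_map (hX i) (hW i)]
  rw [evariance_map_s4 hfm.aemeasurable hS.aemeasurable, Finset.sum_mul]
  calc (Fintype.card ι - 1 : ℕ) * eVar[f ∘ ∑ i, X i; P]
      ≤ ∑ i, ∫⁻ x, eVar[fun y => f (x + y); P.map (∑ j ∈ {i}ᶜ, X j)] ∂P.map (X i) :=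
        card_sub_one_mul_evariance_le_sum_lintegral_evariance (h := fun _ p => f (p.1 + p.2))
          (fun i => (hX i).aemeasurable) (fun i => (hW i).aemeasurable) (fun _ => by fun_prop)
          (fun _ _ hij => hind.indepFun hij) hXW (hfm.comp hS).aemeasurable
          fun i ω => by simp [hsplit i]
    _ ≤ ∑ i, C i * ∫⁻ x, ‖gradient f x‖₊ ^ 2 ∂P.map (∑ i, X i) := by
        refine Finset.sum_le_sum fun i _ => ?_
        rw [hconv i]
        exact (hC i).lintegral_evariance_le_conv _ hf

theorem map_sum_of_map_sum_compl [Nontrivial ι] (hX : ∀ i, Measurable (X i))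
    (hind : iIndepFun X P) (hC : ∀ i, PoincareInequality (P.map (∑ j ∈ {i}ᶜ, X j)) (C i)) :
    PoincareInequality (P.map (∑ i, X i)) ((∑ i, C i) / (Fintype.card ι - 1 : ℕ)) := fun f hf => by
  have hcard : Fintype.card ι - 1 ≠ 0 := Nat.sub_ne_zero_of_lt Fintype.one_lt_card
  rw [div_eq_mul_inv, mul_right_comm, ← div_eq_mul_inv,
    ENNReal.le_div_iff_mul_le (.inl (by exact_mod_cast hcard)) (.inl (natCast_ne_top _)), mul_comm]
  exact card_sub_one_mul_evariance_map_sum_le hX hind hC hf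

end Sum

end PoincareInequality

lemma poincareInequality_map_const_smul_iff [BorelSpace E] {μ : Measure E} {C : ℝ≥0∞} {a : ℝ}
    (ha : a ≠ 0) : PoincareInequality (μ.map (a • ·)) (‖a‖ₑ ^ 2 * C) ↔ PoincareInequality μ C := by
  refine ⟨fun h => ?_, fun h => h.map_const_smul a⟩
  have hμ : (μ.map (a • ·)).map (a⁻¹ • ·) = μ := by
    rw [Measure.map_map (measurable_const_smul _) (measurable_const_smul _)]
    simp [Function.comp_def, ha]
  have hC : ‖a⁻¹‖ₑ ^ 2 * (‖a‖ₑ ^ 2 * C) = C := by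
    rw [← mul_assoc, ← mul_pow, ← enorm_mul, inv_mul_cancel₀ ha]
    simp
  simpa only [hμ, hC] using h.map_const_smul a⁻¹

end Poincare

lemma map_pi_sum_compl_singleton {E : Type*} [AddCommMonoid E] [MeasurableSpace E]
    [MeasurableAdd₂ E] {m : ℕ} (μ : Fin (m + 1) → Measure E) [∀ i, IsProbabilityMeasure (μ i)]
    (i : Fin (m + 1)) :
    (Measure.pi μ).map (∑ j ∈ {i}ᶜ, fun x => x j) =
      (Measure.pi fun j => μ (i.succAbove j)).map (∑ j, fun x => x j) := by
  have hdrop : MeasurePreserving (fun x : Fin (m + 1) → E => fun j => x (i.succAbove j))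
      (Measure.pi μ) (Measure.pi fun j => μ (i.succAbove j)) :=
    measurePreserving_snd.comp (measurePreserving_piFinSuccAbove μ i)
  rw [← hdrop.map_eq, Measure.map_map (by fun_prop) hdrop.measurable]
  congr 1 with x
  simp [← Fin.image_succAbove_univ, Finset.sum_image, Fin.succAbove_right_injective.injOn]

section StdSumLaw

variable {d : ℕ} {ν₁ : Measure (EuclideanSpace ℝ (Fin d))} {C : ℝ≥0∞}

lemma poincareInequality_stdSumLaw_iff {n : ℕ} (hn : n ≠ 0) :
    PoincareInequality (stdSumLaw ν₁ n) C ↔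
      PoincareInequality ((Measure.pi fun _ : Fin n => ν₁).map (∑ i, fun x => x i)) (n * C) := by
  have hlaw : stdSumLaw ν₁ n =
      ((Measure.pi fun _ : Fin n => ν₁).map (∑ i, fun x => x i)).map ((√n)⁻¹ • ·) := by
    rw [Measure.map_map (measurable_const_smul _) (by fun_prop), stdSumLaw]
    congr 1 with x : 1
    simp
  have hC : ‖(√n)⁻¹‖ₑ ^ 2 * (n * C) = C := by
    have : ‖(√n)⁻¹‖ₑ ^ 2 = (n : ℝ≥0∞)⁻¹ := by
      rw [← enorm_pow, inv_pow, Real.sq_sqrt n.cast_nonneg]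
      simp [hn]
    rw [this, ← mul_assoc, ENNReal.inv_mul_cancel (by simpa) (by simp), one_mul]
  rw [hlaw, ← poincareInequality_map_const_smul_iff (a := (√n)⁻¹) (C := n * C) (by positivity), hC]

lemma PoincareInequality.stdSumLaw_succ [IsProbabilityMeasure ν₁] {m : ℕ}
    (h : PoincareInequality (stdSumLaw ν₁ (m + 1)) C) :
    PoincareInequality (stdSumLaw ν₁ (m + 2)) C := by
  rw [poincareInequality_stdSumLaw_iff (by omega)] at h ⊢
  have hind : iIndepFun (fun (i : Fin (m + 2)) x => x i) (Measure.pi fun _ => ν₁) :=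
    iIndepFun_pi (X := fun _ => id) fun _ => aemeasurable_id
  have hconst : (∑ _ : Fin (m + 2), (m + 1 : ℕ) * C) / (Fintype.card (Fin (m + 2)) - 1 : ℕ) =
      (m + 2 : ℕ) * C := by
    rw [Finset.sum_const, Finset.card_univ, Fintype.card_fin, nsmul_eq_mul, mul_left_comm,
      mul_div_assoc]
    exact ENNReal.mul_div_cancel (by simp) (natCast_ne_top _)
  rw [← hconst]
  exact map_sum_of_map_sum_compl (by fun_prop) hind fun i => by rwa [map_pi_sum_compl_singleton]

end StdSumLaw

/-- The Poincaré constant is non-increasing along the central limit theorem: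
for i.i.d. random vectors `X_i ~ ν₁` and `ν_n` the law of `(1/√n) ∑_{i=1}^n X_i`,
one has `C_p(ν_n) ≤ C_p(ν_{n-1})` for every `n ≥ 2`. -/
theorem poincareConst_stdSumLaw_antitone {d : ℕ} (ν₁ : Measure (EuclideanSpace ℝ (Fin d)))
    [IsProbabilityMeasure ν₁] (n : ℕ) (hn : 2 ≤ n) :
    poincareConst (stdSumLaw ν₁ n) ≤ poincareConst (stdSumLaw ν₁ (n - 1)) := by
  obtain ⟨m, rfl⟩ := Nat.exists_eq_add_of_le' hn
  exact sInf_le_sInf fun C (hC : PoincareInequality (stdSumLaw ν₁ (m + 1)) C) => hC.stdSumLaw_succ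
end

section
/- Let μ, ν be Borel probability measures on ℝ^d with finite second moments and finite Poincaré constants C_p(μ), C_p(ν), and set σ² := σ²(μ ⋆ ν). Then C_p(μ ⋆ ν) ≤ (C_p(μ) + C_p(ν)) − [C_p(μ) C_p(ν) / (C_p(μ) + C_p(ν))] · (C_p(μ⋆ν) − σ²)² / ((C_p(μ⋆ν) − σ²)² + C_p(μ⋆ν) σ²). -/
open MeasureTheory ProbabilityTheory ENNReal
open scoped RealInnerProductSpace

/-- `σ²(μ) := max_{|α| = 1} Var_μ(x ↦ α·x)`, the largest variance of `μ` in any direction. -/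
noncomputable def maxDirVar {d : ℕ} (μ : Measure (EuclideanSpace ℝ (Fin d))) : ℝ :=
  ⨆ α : {a : EuclideanSpace ℝ (Fin d) // ‖a‖ = 1},
    variance (fun x => ⟪(α : EuclideanSpace ℝ (Fin d)), x⟫) μ

/-!
Conditioning on either summand bounds the variance of `f` under `μ ∗ ν` by the energy `∫ |∇f|²` and
the energy of a partial average of `∇f`. Weighting the two bounds by the constants of the other
measure, the energies of the two partial averages enter only through their sum, which by the
Efron–Stein inequality is at most `∫ |∇f|² + |∫ ∇f|²`. If `f` almost attains the Poincaré constant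
`C` of `μ ∗ ν`, perturbing it by linear functionals shows that `C |∫ ∇f|²` is almost the covariance
of `f` with the functional `∫ ∇f`, hence `C |∫ ∇f|²` is almost at most `σ² ∫ |∇f|²`. Inserting this
yields a Poincaré inequality for `μ ∗ ν` whose constant cannot be smaller than `C`.

Averages `x ↦ ∫ f (x + y) dν` may be differentiable where `f (· + y)` is not, and there their
gradient is not the average of the (zero by convention) gradients. This is harmless: adding a
small generic multiple of a bounded Lipschitz function `l` to the test function removes all energy
at the points where `l` is not differentiable, so the Poincaré inequality for `μ` holds without the
energy on a set `A` off which every bounded Lipschitz function is differentiable `μ`-almost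
everywhere.
-/

section BoundedLipschitz

/-- Bounded and globally Lipschitz real-valued functions, the class on which Poincaré inequalities
are tested below. -/
def BddLipschitz {X : Type*} [PseudoMetricSpace X] (f : X → ℝ) : Prop :=
  (∃ K, LipschitzWith K f) ∧ ∃ M, ∀ x, |f x| ≤ M

namespace BddLipschitz

section Metric

variable {X : Type*} [PseudoMetricSpace X] {f g : X → ℝ}

theorem continuous (hf : BddLipschitz f) : Continuous f :=
  hf.1.choose_spec.continuous

theorem add (hf : BddLipschitz f) (hg : BddLipschitz g) : BddLipschitz (f + g) := by
  obtain ⟨⟨K, hK⟩, M, hM⟩ := hf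
  obtain ⟨⟨K', hK'⟩, M', hM'⟩ := hg
  exact ⟨⟨K + K', hK.add hK'⟩, M + M', fun x => (abs_add_le _ _).trans (add_le_add (hM x) (hM' x))⟩

theorem mul (hf : BddLipschitz f) (hg : BddLipschitz g) : BddLipschitz (f * g) := by
  obtain ⟨⟨K, hK⟩, M, hM⟩ := hf
  obtain ⟨⟨K', hK'⟩, M', hM'⟩ := hg
  refine ⟨⟨M'.toNNReal * K + M.toNNReal * K', ?_⟩, M * M', fun x => ?_⟩
  · refine LipschitzWith.of_dist_le_mul fun x y => ?_
    have hM0 : 0 ≤ M := (abs_nonneg _).trans (hM x)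
    have hM0' : 0 ≤ M' := (abs_nonneg _).trans (hM' x)
    push_cast
    rw [Real.coe_toNNReal _ hM0, Real.coe_toNNReal _ hM0']
    calc dist (f x * g x) (f y * g y) = |g x * (f x - f y) + f y * (g x - g y)| := by
          rw [Real.dist_eq]; ring_nf
      _ ≤ |g x| * dist (f x) (f y) + |f y| * dist (g x) (g y) := by
          rw [Real.dist_eq, Real.dist_eq, ← abs_mul, ← abs_mul]; exact abs_add_le _ _
      _ ≤ M' * (K * dist x y) + M * (K' * dist x y) := by
          gcongr
          exacts [hM' x, hK.dist_le_mul x y, hM y, hK'.dist_le_mul x y]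
      _ = (M' * K + M * K') * dist x y := by ring
  · rw [Pi.mul_apply, abs_mul]
    exact mul_le_mul (hM x) (hM' x) (abs_nonneg _) ((abs_nonneg _).trans (hM x))

theorem const_smul (hf : BddLipschitz f) (c : ℝ) : BddLipschitz (c • f) :=
  mul ⟨⟨0, LipschitzWith.const c⟩, |c|, fun _ => le_rfl⟩ hf

theorem memLp [SecondCountableTopology X] [MeasurableSpace X] [OpensMeasurableSpace X]
    {ρ : Measure X} [IsFiniteMeasure ρ] (hf : BddLipschitz f) (p : ℝ≥0∞) : MemLp f p ρ := by
  obtain ⟨M, hM⟩ := hf.2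
  exact MemLp.of_bound hf.continuous.aestronglyMeasurable M (.of_forall hM)

theorem integrable [SecondCountableTopology X] [MeasurableSpace X] [OpensMeasurableSpace X]
    {ρ : Measure X} [IsFiniteMeasure ρ] (hf : BddLipschitz f) : Integrable f ρ :=
  memLp_one_iff_integrable.1 (hf.memLp 1)

end Metric

section Translation

variable {G : Type*} [SeminormedAddCommGroup G] {f : G → ℝ}

theorem comp_add_right (hf : BddLipschitz f) (y : G) : BddLipschitz fun x => f (x + y) := by
  obtain ⟨⟨K, hK⟩, M, hM⟩ := hf
  exact ⟨⟨K, LipschitzWith.of_dist_le_mul fun a b => by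
    simpa using hK.dist_le_mul (a + y) (b + y)⟩, M, fun x => hM _⟩

theorem comp_add_left (hf : BddLipschitz f) (y : G) : BddLipschitz fun x => f (y + x) := by
  simpa only [add_comm] using hf.comp_add_right y

end Translation

end BddLipschitz

end BoundedLipschitz

section Approximation

open Filter Topology

/-- The truncation of `t` to the interval `[-M, M]`. -/
def clamp (M t : ℝ) : ℝ :=
  max (min t M) (-M)

theorem abs_clamp_le {M : ℝ} (hM : 0 ≤ M) (t : ℝ) : |clamp M t| ≤ M :=
  abs_le.2 ⟨le_max_right _ _, max_le (min_le_right _ _) (by linarith)⟩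

theorem clamp_eq_self {M t : ℝ} (h : |t| ≤ M) : clamp M t = t := by
  rw [clamp, min_eq_left (abs_le.1 h).2, max_eq_left (abs_le.1 h).1]

theorem lipschitzWith_clamp (M : ℝ) : LipschitzWith 1 (clamp M) :=
  (LipschitzWith.id.min_const M).max_const (-M)

theorem BddLipschitz.mul_of_hasCompactSupport {X : Type*} [PseudoMetricSpace X] {f χ : X → ℝ}
    {M : ℝ} (hf : LocallyLipschitz f) (hfM : ∀ x, |f x| ≤ M) (hχ : BddLipschitz χ)
    (hχs : HasCompactSupport χ) : BddLipschitz (f * χ) := by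
  obtain ⟨K, hK⟩ := (hf.locallyLipschitzOn (s := tsupport χ)).exists_lipschitzOnWith_of_compact hχs
  obtain ⟨g, hg, hfg⟩ := hK.extend_real
  have hgM : BddLipschitz fun x => clamp |M| (g x) :=
    ⟨⟨1 * K, (lipschitzWith_clamp _).comp hg⟩, |M|, fun x => abs_clamp_le (abs_nonneg M) _⟩
  convert hgM.mul hχ using 1
  ext x
  by_cases hx : x ∈ tsupport χ
  · simp only [Pi.mul_apply, ← hfg hx, clamp_eq_self ((hfM x).trans (le_abs_self M))]
  · simp only [Pi.mul_apply, image_eq_zero_of_notMem_tsupport hx, mul_zero]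

variable {E : Type*} [NormedAddCommGroup E] [NormedSpace ℝ E]

theorem norm_fderiv_clamp_comp_le {f : E → ℝ} {M : ℝ} (hM : 0 ≤ M) {x : E}
    (hf : ContinuousAt f x) : ‖fderiv ℝ (fun y => clamp M (f y)) x‖ ≤ ‖fderiv ℝ f x‖ := by
  rcases lt_or_ge |f x| M with h | h
  · have hev : (fun y => clamp M (f y)) =ᶠ[𝓝 x] f :=
      (hf.abs.eventually (gt_mem_nhds h)).mono fun y hy => clamp_eq_self hy.le
    rw [hev.fderiv_eq]
  · suffices fderiv ℝ (fun y => clamp M (f y)) x = 0 by simp [this]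
    rcases le_abs'.1 h with h | h
    · have hx : clamp M (f x) = -M := max_eq_right ((min_le_left _ _).trans h)
      exact IsLocalMin.fderiv_eq_zero (.of_forall fun y => hx.trans_le (le_max_right _ _))
    · have hx : clamp M (f x) = M := by rw [clamp, min_eq_right h, max_eq_left (by linarith)]
      exact IsLocalMax.fderiv_eq_zero
        (.of_forall fun y => (abs_le.1 (abs_clamp_le hM _)).2.trans_eq hx.symm)

theorem fderiv_mul_eq_zero_of_not_differentiableAt {f χ : E → ℝ} {M : ℝ} {x : E}
    (hfM : ∀ y, |f y| ≤ M) (hχ : DifferentiableAt ℝ χ x) (hχ0 : ∀ y, 0 ≤ χ y)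
    (hf : ¬DifferentiableAt ℝ f x) : fderiv ℝ (f * χ) x = 0 := by
  rcases (hχ0 x).eq_or_lt with h0 | h0
  · have hχ' : fderiv ℝ χ x = 0 := IsLocalMin.fderiv_eq_zero (.of_forall fun y => h0 ▸ hχ0 y)
    refine HasFDerivAt.fderiv (.of_isLittleO
      (Asymptotics.IsBigO.trans_isLittleO (.of_bound M (.of_forall fun y => ?_))
        hχ.hasFDerivAt.isLittleO))
    simp only [hχ', ← h0, Pi.mul_apply, zero_apply, mul_zero, sub_zero, norm_mul]
    exact mul_le_mul_of_nonneg_right (hfM y) (norm_nonneg _)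
  · refine fderiv_zero_of_not_differentiableAt fun h => hf ?_
    refine (h.mul (hχ.inv h0.ne')).congr_of_eventuallyEq ?_
    filter_upwards [hχ.continuousAt.eventually (lt_mem_nhds h0)] with y hy
    simp only [Pi.mul_apply, Pi.inv_apply]
    field_simp

theorem norm_fderiv_mul_cutoff_le {f χ : E → ℝ} {M : ℝ} {x : E} (hfM : ∀ y, |f y| ≤ M)
    (hχ : DifferentiableAt ℝ χ x) (hχI : ∀ y, χ y ∈ Set.Icc 0 1) :
    ‖fderiv ℝ (f * χ) x‖ ≤ ‖fderiv ℝ f x‖ + M * ‖fderiv ℝ χ x‖ := by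
  have hM : 0 ≤ M := (abs_nonneg _).trans (hfM x)
  by_cases hf : DifferentiableAt ℝ f x
  · calc ‖fderiv ℝ (f * χ) x‖ ≤ |f x| * ‖fderiv ℝ χ x‖ + |χ x| * ‖fderiv ℝ f x‖ := by
          rw [fderiv_mul hf hχ, ← Real.norm_eq_abs, ← Real.norm_eq_abs, ← norm_smul, ← norm_smul]
          exact norm_add_le _ _
      _ ≤ M * ‖fderiv ℝ χ x‖ + 1 * ‖fderiv ℝ f x‖ := by
          gcongr
          exacts [hfM x, (abs_of_nonneg (hχI x).1).trans_le (hχI x).2]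
      _ = ‖fderiv ℝ f x‖ + M * ‖fderiv ℝ χ x‖ := by ring
  · rw [fderiv_mul_eq_zero_of_not_differentiableAt hfM hχ (fun y => (hχI y).1) hf, norm_zero]
    positivity

variable [FiniteDimensional ℝ E]

theorem exists_cutoff (R : ℝ) {ε : NNReal} (hε : 0 < ε) :
    ∃ χ : E → ℝ, Differentiable ℝ χ ∧ LipschitzWith ε χ ∧ HasCompactSupport χ ∧
      (∀ x, χ x ∈ Set.Icc 0 1) ∧ ∀ x, ‖x‖ ≤ R → χ x = 1 := by
  let b : ContDiffBump (0 : E) := ⟨1, 2, one_pos, one_lt_two⟩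
  have hb : ContDiff ℝ 1 b := b.contDiff
  obtain ⟨K, hK⟩ := hb.lipschitzWith_of_hasCompactSupport b.hasCompactSupport one_ne_zero
  obtain ⟨t, ht0, htR, htK⟩ : ∃ t : ℝ, 0 < t ∧ R ≤ t ∧ K ≤ t * ε := by
    refine ⟨|R| + K / ε + 1, by positivity, ?_, ?_⟩
    · linarith [le_abs_self R, (by positivity : (0 : ℝ) ≤ K / ε)]
    · rw [← div_le_iff₀ (by exact_mod_cast hε)]
      linarith [abs_nonneg R]
  refine ⟨fun x => b (t⁻¹ • x), (hb.differentiable one_ne_zero).comp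
    (differentiable_id.const_smul t⁻¹), ?_, ?_, fun x => ⟨b.nonneg, b.le_one⟩, fun x hx => ?_⟩
  · refine (hK.comp (lipschitzWith_smul t⁻¹)).weaken ?_
    rw [← NNReal.coe_le_coe, NNReal.coe_mul, coe_nnnorm, norm_inv, Real.norm_of_nonneg ht0.le,
      ← div_eq_mul_inv]
    exact (div_le_iff₀' ht0).2 htK
  · exact b.hasCompactSupport.comp_homeomorph (Homeomorph.smulOfNeZero _ (inv_ne_zero ht0.ne'))
  · refine b.one_of_mem_closedBall ?_
    rw [mem_closedBall_zero_iff, norm_smul, norm_inv, Real.norm_of_nonneg ht0.le]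
    exact (inv_mul_le_iff₀ ht0).2 (by simpa [b] using hx.trans htR)

theorem exists_bddLipschitz_tendsto {f : E → ℝ} (hf : LocallyLipschitz f) :
    ∃ F : ℕ → E → ℝ, (∀ n, BddLipschitz (F n)) ∧
      (∀ x, Tendsto (fun n => F n x) atTop (𝓝 (f x))) ∧
      ∀ n x, ‖fderiv ℝ (F n) x‖ ≤ ‖fderiv ℝ f x‖ + 1 / ((n : ℝ) + 1) := by
  have hδ (n : ℕ) : (0 : NNReal) < (1 / (n + 1)) ^ 2 := by positivity
  choose χ hχd hχL hχs hχI hχ1 using fun n : ℕ => exists_cutoff (E := E) n (hδ n)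
  have hχ (n : ℕ) : BddLipschitz (χ n) :=
    ⟨⟨_, hχL n⟩, 1, fun x => (abs_of_nonneg (hχI n x).1).trans_le (hχI n x).2⟩
  have hM (n : ℕ) : (0 : ℝ) ≤ n + 1 := by positivity
  refine ⟨fun n => (fun x => clamp (n + 1) (f x)) * χ n, fun n => ?_, fun x => ?_, fun n x => ?_⟩
  · exact .mul_of_hasCompactSupport ((lipschitzWith_clamp _).locallyLipschitz.comp hf)
      (fun x => abs_clamp_le (hM n) _) (hχ n) (hχs n)
  · refine tendsto_const_nhds.congr' ?_
    obtain ⟨N, hN⟩ := exists_nat_ge (max |f x| ‖x‖)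
    filter_upwards [eventually_ge_atTop N] with n hn
    have hnN : max |f x| ‖x‖ ≤ n := hN.trans (by exact_mod_cast hn)
    rw [Pi.mul_apply, hχ1 n x ((le_max_right _ _).trans hnN), mul_one,
      clamp_eq_self (by linarith [(le_max_left _ _).trans hnN])]
  · calc _ ≤ ‖fderiv ℝ (fun y => clamp (n + 1) (f y)) x‖ + (n + 1) * ‖fderiv ℝ (χ n) x‖ :=
          norm_fderiv_mul_cutoff_le (fun y => abs_clamp_le (hM n) _) (hχd n x) (hχI n)
      _ ≤ ‖fderiv ℝ f x‖ + (n + 1) * (1 / (n + 1)) ^ 2 := by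
          gcongr
          · exact norm_fderiv_clamp_comp_le (hM n) hf.continuous.continuousAt
          · exact_mod_cast norm_fderiv_le_of_lipschitz ℝ (hχL n)
      _ = ‖fderiv ℝ f x‖ + 1 / (n + 1) := by field_simp

end Approximation

section VarianceSemicontinuity

open Filter Topology

variable {Ω : Type*} [MeasurableSpace Ω] {ρ : Measure Ω} [IsProbabilityMeasure ρ]

theorem lintegral_prod_enorm_sub_sq_of_memLp {X : Ω → ℝ} (hX : MemLp X 2 ρ) :
    ∫⁻ p, ‖X p.1 - X p.2‖ₑ ^ 2 ∂ρ.prod ρ = 2 * evariance X ρ := by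
  have hY : MemLp (fun p : Ω × Ω => X p.1 - X p.2) 2 (ρ.prod ρ) :=
    (hX.comp_fst ρ).sub (hX.comp_snd ρ)
  have hmean : ∫ p, (X p.1 - X p.2) ∂ρ.prod ρ = 0 := by
    rw [integral_sub ((hX.comp_fst ρ).integrable one_le_two)
      ((hX.comp_snd ρ).integrable one_le_two), integral_fun_fst, integral_fun_snd, sub_self]
  calc ∫⁻ p, ‖X p.1 - X p.2‖ₑ ^ 2 ∂ρ.prod ρ
      = evariance (fun p : Ω × Ω => X p.1 - X p.2) (ρ.prod ρ) := by
        simp only [evariance, hmean, sub_zero]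
    _ = ENNReal.ofReal Var[fun p : Ω × Ω => X p.1 + (-X) p.2; ρ.prod ρ] := by
        simp only [Pi.neg_apply, ← sub_eq_add_neg, hY.ofReal_variance_eq]
    _ = ENNReal.ofReal (2 * Var[X; ρ]) := by
        rw [variance_add_prod hX hX.neg, variance_neg, two_mul]
    _ = 2 * evariance X ρ := by
        rw [ENNReal.ofReal_mul zero_le_two, hX.ofReal_variance_eq, ENNReal.ofReal_ofNat]

theorem memLp_two_of_lintegral_prod_enorm_sub_sq_ne_top {X : Ω → ℝ}
    (hX : AEStronglyMeasurable X ρ) (h : ∫⁻ p, ‖X p.1 - X p.2‖ₑ ^ 2 ∂ρ.prod ρ ≠ ⊤) :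
    MemLp X 2 ρ := by
  have hm : AEMeasurable (fun p : Ω × Ω => ‖X p.1 - X p.2‖ₑ ^ 2) (ρ.prod ρ) :=
    (hX.comp_fst.sub hX.comp_snd).enorm.pow_const 2
  rw [lintegral_prod _ hm] at h
  obtain ⟨x, hx⟩ := (ae_lt_top' hm.lintegral_prod_right' h).exists
  have hsec : MemLp (fun y => X x - X y) 2 ρ := by
    refine ⟨aestronglyMeasurable_const.sub hX, ?_⟩
    rw [eLpNorm_lt_top_iff_lintegral_rpow_enorm_lt_top two_ne_zero ofNat_ne_top]
    simpa using hx
  simpa [Pi.sub_def] using (memLp_const (X x)).sub hsec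

theorem lintegral_prod_enorm_sub_sq {X : Ω → ℝ} (hX : AEStronglyMeasurable X ρ) :
    ∫⁻ p, ‖X p.1 - X p.2‖ₑ ^ 2 ∂ρ.prod ρ = 2 * evariance X ρ := by
  by_cases hL : MemLp X 2 ρ
  · exact lintegral_prod_enorm_sub_sq_of_memLp hL
  · rw [evariance_eq_top hX hL, ENNReal.mul_top two_ne_zero]
    by_contra h
    exact hL (memLp_two_of_lintegral_prod_enorm_sub_sq_ne_top hX h)

/-- Symmetrization removes the means, whose convergence is not known; then Fatou applies. -/
theorem evariance_le_liminf_evariance {F : ℕ → Ω → ℝ} {f : Ω → ℝ}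
    (hF : ∀ n, AEStronglyMeasurable (F n) ρ)
    (hlim : ∀ᵐ x ∂ρ, Tendsto (fun n => F n x) atTop (𝓝 (f x))) :
    evariance f ρ ≤ liminf (fun n => evariance (F n) ρ) atTop := by
  have hf : AEStronglyMeasurable f ρ := aestronglyMeasurable_of_tendsto_ae atTop hF hlim
  have hlim' : ∀ᵐ p ∂ρ.prod ρ,
      ‖f p.1 - f p.2‖ₑ ^ 2 = liminf (fun n => ‖F n p.1 - F n p.2‖ₑ ^ 2) atTop := by
    filter_upwards [Measure.quasiMeasurePreserving_fst.ae hlim,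
      Measure.quasiMeasurePreserving_snd.ae hlim] with p h₁ h₂
    exact (((ENNReal.continuous_pow 2).tendsto _).comp (h₁.sub h₂).enorm).liminf_eq.symm
  have key : 2 * evariance f ρ ≤ 2 * liminf (fun n => evariance (F n) ρ) atTop := by
    calc 2 * evariance f ρ = ∫⁻ p, liminf (fun n => ‖F n p.1 - F n p.2‖ₑ ^ 2) atTop ∂ρ.prod ρ := by
          rw [← lintegral_prod_enorm_sub_sq hf, lintegral_congr_ae hlim']
      _ ≤ liminf (fun n => ∫⁻ p, ‖F n p.1 - F n p.2‖ₑ ^ 2 ∂ρ.prod ρ) atTop :=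
          lintegral_liminf_le' fun n => ((hF n).comp_fst.sub (hF n).comp_snd).enorm.pow_const 2
      _ = 2 * liminf (fun n => evariance (F n) ρ) atTop := by
          rw [← ENNReal.liminf_const_mul_of_ne_top ofNat_ne_top]
          simp only [lintegral_prod_enorm_sub_sq (hF _)]
  exact (ENNReal.mul_le_mul_iff_right two_ne_zero ofNat_ne_top).1 key

end VarianceSemicontinuity

section PoincareInequality

open Filter Topology

theorem continuous_integral_add_const_sq {Ω : Type*} [MeasurableSpace Ω] {P : Measure Ω}
    [IsFiniteMeasure P] {X : Ω → ℝ} (hX : MemLp X 2 P) :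
    Continuous fun t => ∫ ω, (X ω + t) ^ 2 ∂P := by
  have expand (t : ℝ) : ∫ ω, (X ω + t) ^ 2 ∂P =
      ∫ ω, X ω ^ 2 ∂P + (∫ ω, X ω ∂P) * (2 * t) + P.real Set.univ * t ^ 2 := by
    have hI : Integrable (fun ω => X ω * (2 * t)) P := (hX.integrable one_le_two).mul_const _
    have hq : Integrable (fun ω => X ω ^ 2 + X ω * (2 * t)) P := hX.integrable_sq.add hI
    rw [← integral_mul_const, ← smul_eq_mul (P.real _), ← integral_const,
      ← integral_add hX.integrable_sq hI, ← integral_add hq (integrable_const _)]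
    congr 1
    ext ω
    ring
  simp only [expand]
  fun_prop

variable {E : Type*} [NormedAddCommGroup E] [NormedSpace ℝ E] [MeasurableSpace E] {ρ : Measure E}
  {c : ℝ}

/-- The Poincaré inequality for `ρ` with constant `c`, tested on bounded Lipschitz functions only.
As in `poincareConst`, the derivative counts as `0` at points of nondifferentiability. -/
structure PoincareIneq (ρ : Measure E) (c : ℝ) : Prop where
  nonneg : 0 ≤ c
  variance_le : ∀ g : E → ℝ, BddLipschitz g → Var[g; ρ] ≤ c * ∫ x, ‖fderiv ℝ g x‖ ^ 2 ∂ρ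

variable [BorelSpace E]

theorem BddLipschitz.memLp_fderiv [SecondCountableTopology (E →L[ℝ] ℝ)] [IsFiniteMeasure ρ]
    {f : E → ℝ} (hf : BddLipschitz f) (p : ℝ≥0∞) : MemLp (fderiv ℝ f) p ρ := by
  obtain ⟨K, hK⟩ := hf.1
  exact .of_bound (measurable_fderiv ℝ f).aestronglyMeasurable K
    (.of_forall fun _ => norm_fderiv_le_of_lipschitz ℝ hK)

theorem memLp_two_norm_fderiv_iff {f : E → ℝ} :
    MemLp (fun x => ‖fderiv ℝ f x‖) 2 ρ ↔ Integrable (fun x => ‖fderiv ℝ f x‖ ^ 2) ρ :=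
  memLp_two_iff_integrable_sq (measurable_fderiv ℝ f).norm.aestronglyMeasurable

namespace PoincareIneq

variable [IsProbabilityMeasure ρ] [FiniteDimensional ℝ E] {f : E → ℝ}

theorem evariance_le (h : PoincareIneq ρ c) (hf : LocallyLipschitz f)
    (hE : Integrable (fun x => ‖fderiv ℝ f x‖ ^ 2) ρ) :
    evariance f ρ ≤ ENNReal.ofReal (c * ∫ x, ‖fderiv ℝ f x‖ ^ 2 ∂ρ) := by
  obtain ⟨F, hFb, hFlim, hF'⟩ := exists_bddLipschitz_tendsto hf
  let B (ε : ℝ) : ℝ := ∫ x, (‖fderiv ℝ f x‖ + ε) ^ 2 ∂ρ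
  have hD := memLp_two_norm_fderiv_iff.2 hE
  have hBc : Continuous B := continuous_integral_add_const_sq hD
  have hle (n : ℕ) : evariance (F n) ρ ≤ ENNReal.ofReal (c * B (1 / (n + 1))) := by
    rw [← ((hFb n).memLp 2).ofReal_variance_eq]
    refine ENNReal.ofReal_le_ofReal ((h.variance_le _ (hFb n)).trans ?_)
    refine mul_le_mul_of_nonneg_left (integral_mono_of_nonneg ?_ ?_ ?_) h.nonneg
    · exact .of_forall fun x => sq_nonneg _
    · exact (hD.add (memLp_const _)).integrable_sq
    · exact .of_forall fun x => pow_le_pow_left₀ (norm_nonneg _) (hF' n x) 2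
  have hBlim : Tendsto (fun n : ℕ => ENNReal.ofReal (c * B (1 / (n + 1)))) atTop
      (𝓝 (ENNReal.ofReal (c * B 0))) := by
    have hcont : Continuous fun ε => ENNReal.ofReal (c * B ε) :=
      ENNReal.continuous_ofReal.comp (hBc.const_mul c)
    exact hcont.continuousAt.tendsto.comp tendsto_one_div_add_atTop_nhds_zero_nat
  calc evariance f ρ ≤ liminf (fun n => evariance (F n) ρ) atTop :=
        evariance_le_liminf_evariance (fun n => (hFb n).continuous.aestronglyMeasurable)
          (.of_forall hFlim)
    _ ≤ liminf (fun n : ℕ => ENNReal.ofReal (c * B (1 / (n + 1)))) atTop :=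
        liminf_le_liminf (.of_forall hle)
    _ = ENNReal.ofReal (c * ∫ x, ‖fderiv ℝ f x‖ ^ 2 ∂ρ) := by simpa [B] using hBlim.liminf_eq

theorem memLp_two (h : PoincareIneq ρ c) (hf : LocallyLipschitz f)
    (hE : Integrable (fun x => ‖fderiv ℝ f x‖ ^ 2) ρ) : MemLp f 2 ρ :=
  (evariance_lt_top_iff_memLp hf.continuous.aestronglyMeasurable).1
    ((h.evariance_le hf hE).trans_lt ENNReal.ofReal_lt_top)

theorem variance_le_of_locallyLipschitz (h : PoincareIneq ρ c) (hf : LocallyLipschitz f)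
    (hE : Integrable (fun x => ‖fderiv ℝ f x‖ ^ 2) ρ) :
    Var[f; ρ] ≤ c * ∫ x, ‖fderiv ℝ f x‖ ^ 2 ∂ρ :=
  ENNReal.toReal_le_of_le_ofReal
    (mul_nonneg h.nonneg (integral_nonneg fun _ => sq_nonneg _)) (h.evariance_le hf hE)

end PoincareIneq

end PoincareInequality

section Nondifferentiability

open Filter Topology

theorem variance_add_const_smul {Ω : Type*} [MeasurableSpace Ω] {P : Measure Ω}
    [IsFiniteMeasure P] {X Y : Ω → ℝ} (hX : MemLp X 2 P) (hY : MemLp Y 2 P) (t : ℝ) :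
    Var[X + t • Y; P] = Var[X; P] + 2 * t * cov[X, Y; P] + t ^ 2 * Var[Y; P] := by
  rw [variance_add hX (hY.const_smul t), covariance_smul_right, variance_smul, mul_assoc]

variable {E : Type*} [NormedAddCommGroup E] [NormedSpace ℝ E]

theorem norm_fderiv_add_smul_le {f : E → ℝ} {x : E} (hf : DifferentiableAt ℝ f x) (g : E → ℝ)
    (t : ℝ) : ‖fderiv ℝ (g + t • f) x‖ ≤ ‖fderiv ℝ g x‖ + |t| * ‖fderiv ℝ f x‖ := by
  by_cases hg : DifferentiableAt ℝ g x
  · rw [fderiv_add hg (hf.const_smul t), fderiv_const_smul hf, ← Real.norm_eq_abs, ← norm_smul]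
    exact norm_add_le _ _
  · have hgf : ¬DifferentiableAt ℝ (g + t • f) x := fun h =>
      hg (by simpa using h.sub (hf.const_smul t))
    rw [fderiv_zero_of_not_differentiableAt hgf, norm_zero]
    positivity

variable [MeasurableSpace E]

/-- The Poincaré inequality for bounded Lipschitz functions in which the energy is only counted
outside of the set `A`; it interpolates between `PoincareIneq` and an inequality that only involves
derivatives at points where they exist. -/
structure PoincareIneqOff (μ : Measure E) (c : ℝ) (A : Set E) : Prop where
  nonneg : 0 ≤ c
  variance_le : ∀ g : E → ℝ, BddLipschitz g → Var[g; μ] ≤ c * ∫ x in Aᶜ, ‖fderiv ℝ g x‖ ^ 2 ∂μ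

variable {μ : Measure E} {c : ℝ}

theorem PoincareIneq.off_empty (h : PoincareIneq μ c) : PoincareIneqOff μ c ∅ :=
  ⟨h.nonneg, fun g hg => by simpa using h.variance_le g hg⟩

variable [BorelSpace E]

theorem measurableSet_setOf_not_differentiableAt (f : E → ℝ) :
    MeasurableSet {x | ¬DifferentiableAt ℝ f x} :=
  (measurableSet_of_differentiableAt ℝ f).compl

/-- The sets are disjoint for distinct `ε`: two of the functions `g + ε • f` are never both
differentiable where `f` is not. -/
theorem countable_setOf_measure_differentiableAt_add_smul_pos [SFinite μ] (f g : E → ℝ) :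
    {ε : ℝ | 0 < μ {x | ¬DifferentiableAt ℝ f x ∧ DifferentiableAt ℝ (g + ε • f) x}}.Countable := by
  refine Measure.countable_meas_pos_of_disjoint_iUnion
    (fun ε => (measurableSet_setOf_not_differentiableAt f).inter
      (measurableSet_of_differentiableAt ℝ (g + ε • f))) fun ε ε' hne => ?_
  refine Set.disjoint_left.2 fun x hx hx' => hx.1 ?_
  have h0 : ε - ε' ≠ 0 := sub_ne_zero.2 hne
  have hsub : f = (ε - ε')⁻¹ • ((g + ε • f) - (g + ε' • f)) := by
    rw [add_sub_add_left_eq_sub, ← sub_smul, inv_smul_smul₀ h0]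
  rw [hsub]
  exact (hx.2.sub hx'.2).const_smul _

theorem BddLipschitz.integrable_sq_norm_fderiv [IsFiniteMeasure μ] {f : E → ℝ}
    (hf : BddLipschitz f) :
    Integrable (fun x => ‖fderiv ℝ f x‖ ^ 2) μ := by
  obtain ⟨K, hK⟩ := hf.1
  exact memLp_two_norm_fderiv_iff.1 (.of_bound (measurable_fderiv ℝ f).norm.aestronglyMeasurable K
    (.of_forall fun x => by simpa using norm_fderiv_le_of_lipschitz ℝ hK))

variable [IsFiniteMeasure μ]

namespace PoincareIneqOff

theorem variance_add_smul_le {A : Set E} (h : PoincareIneqOff μ c A) (hA : MeasurableSet A)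
    {f g : E → ℝ} (hf : BddLipschitz f) (hg : BddLipschitz g) {K : NNReal} (hK : LipschitzWith K f)
    {ε : ℝ} (hε : μ {x | ¬DifferentiableAt ℝ f x ∧ DifferentiableAt ℝ (g + ε • f) x} = 0) :
    Var[g + ε • f; μ] ≤
      c * ∫ x in (A ∪ {x | ¬DifferentiableAt ℝ f x})ᶜ, (‖fderiv ℝ g x‖ + |ε| * K) ^ 2 ∂μ := by
  set N := {x | ¬DifferentiableAt ℝ f x}
  have hgf := hg.add (hf.const_smul ε)
  have hsub : (A ∪ N)ᶜ ⊆ Aᶜ := Set.compl_subset_compl.2 Set.subset_union_left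
  have hNm : MeasurableSet (A ∪ N)ᶜ := (hA.union (measurableSet_setOf_not_differentiableAt f)).compl
  have hN0 : ∀ᵐ x ∂μ, x ∈ Aᶜ \ (A ∪ N)ᶜ → ‖fderiv ℝ (g + ε • f) x‖ ^ 2 = 0 := by
    filter_upwards [measure_eq_zero_iff_ae_notMem.1 hε] with x hx hxA
    have hxN : x ∈ N := by simpa [hxA.1] using hxA.2
    have hd : ¬DifferentiableAt ℝ (g + ε • f) x := fun hd => hx ⟨hxN, hd⟩
    simp [fderiv_zero_of_not_differentiableAt hd]
  have hint : Integrable (fun x => (‖fderiv ℝ g x‖ + |ε| * K) ^ 2) μ :=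
    ((memLp_two_norm_fderiv_iff.2 hg.integrable_sq_norm_fderiv).add (memLp_const _)).integrable_sq
  calc Var[g + ε • f; μ] ≤ c * ∫ x in Aᶜ, ‖fderiv ℝ (g + ε • f) x‖ ^ 2 ∂μ := h.variance_le _ hgf
    _ = c * ∫ x in (A ∪ N)ᶜ, ‖fderiv ℝ (g + ε • f) x‖ ^ 2 ∂μ := by
        rw [setIntegral_eq_of_subset_of_ae_sdiff_eq_zero hA.compl.nullMeasurableSet hsub hN0]
    _ ≤ c * ∫ x in (A ∪ N)ᶜ, (‖fderiv ℝ g x‖ + |ε| * K) ^ 2 ∂μ := by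
        refine mul_le_mul_of_nonneg_left (setIntegral_mono_on
          hgf.integrable_sq_norm_fderiv.integrableOn hint.integrableOn hNm fun x hx => ?_) h.nonneg
        have hfx : DifferentiableAt ℝ f x := not_not.1 fun hxN => hx (Or.inr hxN)
        refine pow_le_pow_left₀ (norm_nonneg _) ((norm_fderiv_add_smul_le hfx g ε).trans ?_) 2
        gcongr
        exact norm_fderiv_le_of_lipschitz ℝ hK

theorem iUnion_of_monotone {A : ℕ → Set E} (hA : ∀ n, MeasurableSet (A n)) (hmono : Monotone A)
    (h : ∀ n, PoincareIneqOff μ c (A n)) : PoincareIneqOff μ c (⋃ n, A n) := by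
  refine ⟨(h 0).nonneg, fun g hg => ?_⟩
  have hlim := tendsto_setIntegral_of_antitone (μ := μ) (f := fun x => ‖fderiv ℝ g x‖ ^ 2)
    (fun n => (hA n).compl) (fun m n hmn => Set.compl_subset_compl.2 (hmono hmn))
    ⟨0, hg.integrable_sq_norm_fderiv.integrableOn⟩
  rw [← Set.compl_iUnion] at hlim
  exact ge_of_tendsto' (hlim.const_mul c) fun n => (h n).variance_le g hg

variable [SecondCountableTopology E]

/-- For all but countably many `ε` the energy of `g + ε • f` at the points where `f` is not
differentiable vanishes; now let such `ε` tend to `0`. -/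
theorem union_nondifferentiable {A : Set E} (h : PoincareIneqOff μ c A) (hA : MeasurableSet A)
    {f : E → ℝ} (hf : BddLipschitz f) :
    PoincareIneqOff μ c (A ∪ {x | ¬DifferentiableAt ℝ f x}) := by
  refine ⟨h.nonneg, fun g hg => ?_⟩
  set N := {x | ¬DifferentiableAt ℝ f x}
  obtain ⟨K, hK⟩ := hf.1
  have hvar : Continuous fun ε : ℝ => Var[g + ε • f; μ] := by
    simp only [variance_add_const_smul (hg.memLp 2) (hf.memLp 2)]
    fun_prop
  have henergy : Continuous fun ε : ℝ =>
      c * ∫ x in (A ∪ N)ᶜ, (‖fderiv ℝ g x‖ + |ε| * K) ^ 2 ∂μ := by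
    have hD := memLp_two_norm_fderiv_iff.2 (hg.integrable_sq_norm_fderiv (μ := μ.restrict (A ∪ N)ᶜ))
    exact ((continuous_integral_add_const_sq hD).comp (by fun_prop :
      Continuous fun ε : ℝ => |ε| * K)).const_mul c
  have hdense := (countable_setOf_measure_differentiableAt_add_smul_pos (μ := μ) f g).dense_compl ℝ
  have hle := (isClosed_le hvar henergy).closure_subset_iff.2
    (fun ε hε => h.variance_add_smul_le hA hf hg hK (by simpa using hε)) (hdense 0)
  simpa using hle

theorem iUnion_nondifferentiable (h : PoincareIneqOff μ c ∅) {l : ℕ → E → ℝ}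
    (hl : ∀ i, BddLipschitz (l i)) :
    PoincareIneqOff μ c (⋃ i, {x | ¬DifferentiableAt ℝ (l i) x}) := by
  have hm (n : ℕ) : MeasurableSet (Set.accumulate (fun i => {x | ¬DifferentiableAt ℝ (l i) x}) n) :=
    .iUnion fun i => .iUnion fun _ => measurableSet_setOf_not_differentiableAt (l i)
  rw [← Set.iUnion_accumulate]
  refine iUnion_of_monotone hm Set.monotone_accumulate fun n => ?_
  induction n with
  | zero => simpa using h.union_nondifferentiable .empty (hl 0)
  | succ n ih =>
    simpa only [Set.accumulate_succ] using ih.union_nondifferentiable (hm n) (hl (n + 1))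

end PoincareIneqOff

theorem exists_seq_forall_measure_sdiff_iUnion_eq_zero {α ι : Type*} [MeasurableSpace α]
    [Nonempty ι] {P : Measure α} [IsFiniteMeasure P] {s : ι → Set α}
    (hs : ∀ i, MeasurableSet (s i)) :
    ∃ u : ℕ → ι, ∀ i, P (s i \ ⋃ n, s (u n)) = 0 := by
  let U (u : ℕ → ι) : Set α := ⋃ n, s (u n)
  obtain ⟨v, -, hv, hmem⟩ := exists_seq_tendsto_sSup (Set.range_nonempty fun u => P (U u))
    (OrderTop.bddAbove _)
  choose u hu using hmem
  let w (n : ℕ) : ι := u n.unpair.1 n.unpair.2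
  have hw (u' : ℕ → ι) : P (U u') ≤ P (U w) := by
    refine (le_sSup (Set.mem_range_self (f := fun u => P (U u)) u')).trans
      (le_of_tendsto' hv fun n => hu n ▸ measure_mono ?_)
    exact Set.iUnion_subset fun i => Set.subset_iUnion_of_subset (Nat.pair n i) (by simp [w])
  refine ⟨w, fun i => ?_⟩
  let w' (n : ℕ) : ι := Nat.casesOn n i w
  have hU' : U w' = U w ∪ (s i \ U w) := by
    rw [Set.union_sdiff_self, Set.union_comm]
    ext x
    simp only [U, Set.mem_iUnion, Set.mem_union]
    exact Nat.or_exists_add_one.symm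
  have hle := hw w'
  rw [hU', measure_union Set.disjoint_sdiff_right ((hs i).diff (.iUnion fun n => hs _))] at hle
  by_contra hne
  exact (ENNReal.lt_add_right (measure_ne_top P _) hne).not_ge hle

theorem PoincareIneq.exists_poincareIneqOff_ae_differentiableAt [SecondCountableTopology E]
    (h : PoincareIneq μ c) :
    ∃ A : Set E, MeasurableSet A ∧ PoincareIneqOff μ c A ∧
      ∀ f : E → ℝ, BddLipschitz f → ∀ᵐ x ∂μ, x ∉ A → DifferentiableAt ℝ f x := by
  have : Nonempty {f : E → ℝ // BddLipschitz f} :=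
    ⟨fun _ => 0, ⟨0, LipschitzWith.const 0⟩, 0, by simp⟩
  obtain ⟨u, hu⟩ := exists_seq_forall_measure_sdiff_iUnion_eq_zero (P := μ)
    fun f : {f : E → ℝ // BddLipschitz f} => measurableSet_setOf_not_differentiableAt f.1
  refine ⟨_, .iUnion fun n => measurableSet_setOf_not_differentiableAt (u n).1,
    h.off_empty.iUnion_nondifferentiable fun n => (u n).2, fun f hf => ?_⟩
  filter_upwards [measure_eq_zero_iff_ae_notMem.1 (hu ⟨f, hf⟩)] with x hx hxA
  exact not_not.1 fun hd => hx ⟨hd, hxA⟩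

end Nondifferentiability

section ProductSpace

variable {Ω Ω' : Type*} [MeasurableSpace Ω] [MeasurableSpace Ω'] {P : Measure Ω} {Q : Measure Ω'}
  [IsProbabilityMeasure P] [IsProbabilityMeasure Q]

section Normed

variable {V : Type*} [NormedAddCommGroup V]

theorem ae_memLp_two_prodMk {F : Ω × Ω' → V} (hF : MemLp F 2 (P.prod Q)) :
    ∀ᵐ x ∂P, MemLp (fun y => F (x, y)) 2 Q := by
  have hF2 := (memLp_two_iff_integrable_sq_norm hF.aestronglyMeasurable).1 hF
  filter_upwards [hF.aestronglyMeasurable.prodMk_left, hF2.prod_right_ae] with x hm hi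
  exact (memLp_two_iff_integrable_sq_norm hm).2 hi

variable [NormedSpace ℝ V]

theorem sq_norm_integral_le {X : Ω → V} (hX : MemLp X 2 P) :
    ‖∫ ω, X ω ∂P‖ ^ 2 ≤ ∫ ω, ‖X ω‖ ^ 2 ∂P := by
  have hvar : 0 ≤ ∫ ω, ‖X ω‖ ^ 2 ∂P - (∫ ω, ‖X ω‖ ∂P) ^ 2 := by
    simpa only [variance_eq_sub hX.norm, Pi.pow_apply] using variance_nonneg (fun ω => ‖X ω‖) P
  calc ‖∫ ω, X ω ∂P‖ ^ 2 ≤ (∫ ω, ‖X ω‖ ∂P) ^ 2 :=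
        pow_le_pow_left₀ (norm_nonneg _) (norm_integral_le_integral_norm X) 2
    _ ≤ ∫ ω, ‖X ω‖ ^ 2 ∂P := sub_nonneg.1 hvar

variable {F : Ω × Ω' → V}

theorem ae_sq_norm_integral_prodMk_le (hF : MemLp F 2 (P.prod Q)) :
    ∀ᵐ x ∂P, ‖∫ y, F (x, y) ∂Q‖ ^ 2 ≤ ∫ y, ‖F (x, y)‖ ^ 2 ∂Q :=
  (ae_memLp_two_prodMk hF).mono fun _ hx => sq_norm_integral_le hx

theorem memLp_two_integral_prodMk (hF : MemLp F 2 (P.prod Q)) :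
    MemLp (fun x => ∫ y, F (x, y) ∂Q) 2 P := by
  have hm : AEStronglyMeasurable (fun x => ∫ y, F (x, y) ∂Q) P :=
    hF.aestronglyMeasurable.integral_prod_right'
  refine (memLp_two_iff_integrable_sq_norm hm).2 (hF.norm.integrable_sq.integral_prod_left.mono'
    (hm.norm.pow 2) ?_)
  filter_upwards [ae_sq_norm_integral_prodMk_le hF] with x hx
  simpa using hx

theorem integral_sq_norm_integral_prodMk_le (hF : MemLp F 2 (P.prod Q)) :
    ∫ x, ‖∫ y, F (x, y) ∂Q‖ ^ 2 ∂P ≤ ∫ p, ‖F p‖ ^ 2 ∂P.prod Q := by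
  rw [integral_prod _ hF.norm.integrable_sq]
  exact integral_mono_ae (memLp_two_integral_prodMk hF).norm.integrable_sq
    hF.norm.integrable_sq.integral_prod_left (ae_sq_norm_integral_prodMk_le hF)

end Normed

theorem variance_prod {F : Ω × Ω' → ℝ} (hF : MemLp F 2 (P.prod Q)) :
    Var[F; P.prod Q] =
      ∫ x, Var[fun y => F (x, y); Q] ∂P + Var[fun x => ∫ y, F (x, y) ∂Q; P] := by
  have hu := memLp_two_integral_prodMk hF
  have hcond : ∀ᵐ x ∂P, Var[fun y => F (x, y); Q] =
      ∫ y, F (x, y) ^ 2 ∂Q - (∫ y, F (x, y) ∂Q) ^ 2 :=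
    (ae_memLp_two_prodMk hF).mono fun x hx => variance_eq_sub hx
  rw [integral_congr_ae hcond, integral_sub hF.integrable_sq.integral_prod_left hu.integrable_sq,
    variance_eq_sub hF, variance_eq_sub hu, integral_prod _ (hF.integrable one_le_two)]
  simp only [Pi.pow_apply]
  rw [integral_prod _ hF.integrable_sq]
  ring

variable {H : Type*} [NormedAddCommGroup H] [InnerProductSpace ℝ H] [CompleteSpace H]

theorem integral_sq_norm_sub_integral {X : Ω → H} (hX : MemLp X 2 P) :
    ∫ ω, ‖X ω - ∫ ω', X ω' ∂P‖ ^ 2 ∂P = ∫ ω, ‖X ω‖ ^ 2 ∂P - ‖∫ ω, X ω ∂P‖ ^ 2 := by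
  set m := ∫ ω, X ω ∂P
  have hX1 := hX.integrable one_le_two
  have hcross : Integrable (fun ω => 2 * ⟪X ω, m⟫) P := (hX1.inner_const m).const_mul 2
  have hmean : ∫ ω, ⟪X ω, m⟫ ∂P = ‖m‖ ^ 2 := by
    rw [← real_inner_self_eq_norm_sq, ← integral_inner hX1 m]
    simp only [real_inner_comm]
  have hdiff : Integrable (fun ω => ‖X ω‖ ^ 2 - 2 * ⟪X ω, m⟫) P := hX.norm.integrable_sq.sub hcross
  simp only [norm_sub_sq_real]
  rw [integral_add hdiff (integrable_const _),
    integral_sub hX.norm.integrable_sq hcross, integral_const_mul, hmean, integral_const,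
    probReal_univ, one_smul]
  ring

theorem integral_sq_norm_sub_integral_prodMk {F : Ω × Ω' → H} (hF : MemLp F 2 (P.prod Q)) :
    ∫ p, ‖F p - ∫ y, F (p.1, y) ∂Q‖ ^ 2 ∂P.prod Q =
      ∫ p, ‖F p‖ ^ 2 ∂P.prod Q - ∫ x, ‖∫ y, F (x, y) ∂Q‖ ^ 2 ∂P := by
  have hu := memLp_two_integral_prodMk hF
  have hG : MemLp (fun p => F p - ∫ y, F (p.1, y) ∂Q) 2 (P.prod Q) := hF.sub (hu.comp_fst Q)
  rw [integral_prod _ hG.norm.integrable_sq, integral_prod _ hF.norm.integrable_sq,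
    ← integral_sub hF.norm.integrable_sq.integral_prod_left hu.norm.integrable_sq]
  exact integral_congr_ae
    ((ae_memLp_two_prodMk hF).mono fun x hx => integral_sq_norm_sub_integral hx)

/-- The Efron–Stein inequality; it is Jensen's inequality for `𝔼_P` applied to `F - 𝔼_Q F`. -/
theorem integral_sq_norm_integral_add_le {F : Ω × Ω' → H} (hF : MemLp F 2 (P.prod Q)) :
    ∫ x, ‖∫ y, F (x, y) ∂Q‖ ^ 2 ∂P + ∫ y, ‖∫ x, F (x, y) ∂P‖ ^ 2 ∂Q ≤
      ∫ p, ‖F p‖ ^ 2 ∂P.prod Q + ‖∫ p, F p ∂P.prod Q‖ ^ 2 := by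
  let u (x : Ω) : H := ∫ y, F (x, y) ∂Q
  let w (y : Ω') : H := ∫ x, F (x, y) ∂P
  have hu : MemLp u 2 P := memLp_two_integral_prodMk hF
  have hFs : MemLp (F ∘ Prod.swap) 2 (Q.prod P) :=
    hF.comp_measurePreserving Measure.measurePreserving_swap
  have hw : MemLp w 2 Q := memLp_two_integral_prodMk hFs
  have hG : MemLp (fun p => F p - u p.1) 2 (P.prod Q) := hF.sub (hu.comp_fst Q)
  have hGs : MemLp (fun q : Ω' × Ω => F q.swap - u q.2) 2 (Q.prod P) :=
    hG.comp_measurePreserving Measure.measurePreserving_swap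
  have hF1 : Integrable F (P.prod Q) := hF.integrable one_le_two
  have hmu : ∫ x, u x ∂P = ∫ p, F p ∂P.prod Q := (integral_prod F hF1).symm
  have hmw : ∫ y, w y ∂Q = ∫ p, F p ∂P.prod Q := (integral_prod_symm F hF1).symm
  have hright : ∀ᵐ y ∂Q, ∫ x, (F (x, y) - u x) ∂P = w y - ∫ y', w y' ∂Q := by
    filter_upwards [ae_memLp_two_prodMk hFs] with y hy
    rw [hmw, ← hmu]
    exact integral_sub (hy.integrable one_le_two) (hu.integrable one_le_two)
  have hkey : ∫ y, ‖w y‖ ^ 2 ∂Q - ‖∫ y, w y ∂Q‖ ^ 2 ≤ ∫ p, ‖F p - u p.1‖ ^ 2 ∂P.prod Q := by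
    calc ∫ y, ‖w y‖ ^ 2 ∂Q - ‖∫ y, w y ∂Q‖ ^ 2
        = ∫ y, ‖∫ x, (F (x, y) - u x) ∂P‖ ^ 2 ∂Q := by
          rw [← integral_sq_norm_sub_integral hw]
          exact integral_congr_ae (hright.mono fun y hy => by simp only [hy])
      _ ≤ ∫ q : Ω' × Ω, ‖F q.swap - u q.2‖ ^ 2 ∂Q.prod P := integral_sq_norm_integral_prodMk_le hGs
      _ = ∫ p, ‖F p - u p.1‖ ^ 2 ∂P.prod Q :=
          integral_prod_swap fun p : Ω × Ω' => ‖F p - u p.1‖ ^ 2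
  rw [integral_sq_norm_sub_integral_prodMk hF, hmw] at hkey
  linarith

end ProductSpace

section Convolution

theorem BddLipschitz.integral_add {G : Type*} [NormedAddCommGroup G] [MeasurableSpace G]
    [OpensMeasurableSpace G] [SecondCountableTopology G] {ν : Measure G} [IsProbabilityMeasure ν]
    {f : G → ℝ} (hf : BddLipschitz f) : BddLipschitz fun x => ∫ y, f (x + y) ∂ν := by
  have hi (x : G) : Integrable (fun y => f (x + y)) ν := (hf.comp_add_left x).integrable
  obtain ⟨⟨K, hK⟩, M, hM⟩ := hf
  refine ⟨⟨K, LipschitzWith.of_dist_le_mul fun a b => ?_⟩, M, fun x => by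
    simpa using norm_integral_le_of_norm_le_const (μ := ν) (f := fun y => f (x + y))
      (.of_forall fun y => hM (x + y))⟩
  rw [dist_eq_norm, ← integral_sub (hi a) (hi b)]
  refine (norm_integral_le_of_norm_le_const (C := K * dist a b) (.of_forall fun y => ?_)).trans
    (by simp)
  simpa [dist_eq_norm] using hK.dist_le_mul (a + y) (b + y)

variable {E : Type*} [NormedAddCommGroup E] [NormedSpace ℝ E] [FiniteDimensional ℝ E]
  [MeasurableSpace E] [BorelSpace E] {μ ν : Measure E} {a b : ℝ} {f : E → ℝ}

theorem measurePreserving_add_conv : MeasurePreserving (fun p : E × E => p.1 + p.2)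
    (μ.prod ν) (μ ∗ ν) :=
  ⟨by fun_prop, rfl⟩

variable [IsProbabilityMeasure μ] [IsProbabilityMeasure ν]

theorem hasFDerivAt_integral_add (hf : BddLipschitz f) {x : E}
    (hx : ∀ᵐ y ∂ν, DifferentiableAt ℝ f (x + y)) :
    HasFDerivAt (fun x => ∫ y, f (x + y) ∂ν) (∫ y, fderiv ℝ f (x + y) ∂ν) x := by
  have hfc := hf.continuous
  obtain ⟨K, hK⟩ := hf.1
  refine (hasFDerivAt_integral_of_dominated_loc_of_lip (s := Set.univ) (bound := fun _ => (K : ℝ))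
    Filter.univ_mem (.of_forall fun z => (hfc.comp (continuous_const_add z)).aestronglyMeasurable)
    (hf.comp_add_left x).integrable
    ((measurable_fderiv ℝ f).comp (measurable_const_add x)).aestronglyMeasurable
    (.of_forall fun y => ?_) (integrable_const _) ?_).2
  · refine (LipschitzWith.of_dist_le_mul fun a b => ?_).lipschitzOnWith
    simpa using hK.dist_le_mul (a + y) (b + y)
  · filter_upwards [hx] with y hy
    exact (hasFDerivAt_comp_add_right y).2 hy.hasFDerivAt

theorem memLp_fderiv_conv (hf : BddLipschitz f) :
    MemLp (fun p : E × E => fderiv ℝ f (p.1 + p.2)) 2 (μ.prod ν) :=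
  (hf.memLp_fderiv 2).comp_measurePreserving measurePreserving_add_conv

theorem ae_ae_differentiableAt_add {A : Set E} (hA : MeasurableSet A)
    (hdiff : ∀ y, ∀ᵐ x ∂μ, x ∉ A → DifferentiableAt ℝ (fun x => f (x + y)) x) :
    ∀ᵐ x ∂μ, x ∉ A → ∀ᵐ y ∂ν, DifferentiableAt ℝ f (x + y) := by
  have hswap : ∀ᵐ x ∂μ, ∀ᵐ y ∂ν, x ∉ A → DifferentiableAt ℝ f (x + y) := by
    refine (Measure.ae_ae_comm ?_).2 (.of_forall fun y => ?_)
    · simp only [imp_iff_not_or, not_not]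
      exact (hA.preimage measurable_fst).union
        ((measurableSet_of_differentiableAt ℝ f).preimage (measurable_fst.add measurable_snd))
    · filter_upwards [hdiff y] with x hx hxA
      exact (differentiableAt_comp_add_right y).1 (hx hxA)
  filter_upwards [hswap] with x hx hxA
  filter_upwards [hx] with y hy using hy hxA

namespace PoincareIneq

/-- `x ↦ ∫ f (x + y) ∂ν` may be differentiable where differentiation under the integral fails;
such points are swallowed by the set `A`, on which no energy is needed. -/
theorem variance_integral_add_le (h : PoincareIneq μ a) (hf : BddLipschitz f) :
    Var[fun x => ∫ y, f (x + y) ∂ν; μ] ≤ a * ∫ x, ‖∫ y, fderiv ℝ f (x + y) ∂ν‖ ^ 2 ∂μ := by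
  obtain ⟨A, hA, hAμ, hdiff⟩ := h.exists_poincareIneqOff_ae_differentiableAt
  have hint : Integrable (fun x => ‖∫ y, fderiv ℝ f (x + y) ∂ν‖ ^ 2) μ :=
    (memLp_two_integral_prodMk (memLp_fderiv_conv hf)).norm.integrable_sq
  have hfderiv : ∀ᵐ x ∂μ.restrict Aᶜ, ‖fderiv ℝ (fun x => ∫ y, f (x + y) ∂ν) x‖ ^ 2 ≤
      ‖∫ y, fderiv ℝ f (x + y) ∂ν‖ ^ 2 := by
    refine (ae_restrict_iff' hA.compl).2 ?_
    filter_upwards [ae_ae_differentiableAt_add (ν := ν) hA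
      fun y => hdiff _ (hf.comp_add_right y)] with x hx hxA
    rw [(hasFDerivAt_integral_add hf (hx hxA)).fderiv]
  calc Var[fun x => ∫ y, f (x + y) ∂ν; μ]
      ≤ a * ∫ x in Aᶜ, ‖fderiv ℝ (fun x => ∫ y, f (x + y) ∂ν) x‖ ^ 2 ∂μ :=
        hAμ.variance_le _ hf.integral_add
    _ ≤ a * ∫ x in Aᶜ, ‖∫ y, fderiv ℝ f (x + y) ∂ν‖ ^ 2 ∂μ :=
        mul_le_mul_of_nonneg_left (integral_mono_of_nonneg (.of_forall fun _ => sq_nonneg _)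
          hint.integrableOn hfderiv) h.nonneg
    _ ≤ a * ∫ x, ‖∫ y, fderiv ℝ f (x + y) ∂ν‖ ^ 2 ∂μ :=
        mul_le_mul_of_nonneg_left (setIntegral_le_integral hint
          (.of_forall fun _ => sq_nonneg _)) h.nonneg

theorem integral_variance_add_le (h : PoincareIneq ν b) (hf : BddLipschitz f) :
    ∫ x, Var[fun y => f (x + y); ν] ∂μ ≤ b * ∫ z, ‖fderiv ℝ f z‖ ^ 2 ∂(μ ∗ ν) := by
  have hint := (memLp_fderiv_conv (μ := μ) (ν := ν) hf).norm.integrable_sq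
  rw [integral_conv hf.integrable_sq_norm_fderiv, ← integral_const_mul]
  refine integral_mono_of_nonneg (.of_forall fun x => variance_nonneg _ _)
    (hint.integral_prod_left.const_mul b) (.of_forall fun x => ?_)
  simpa only [fderiv_comp_add_left] using h.variance_le _ (hf.comp_add_left x)

theorem variance_conv_le (hμ : PoincareIneq μ a) (hν : PoincareIneq ν b) (hf : BddLipschitz f) :
    Var[f; μ ∗ ν] ≤ a * ∫ x, ‖∫ y, fderiv ℝ f (x + y) ∂ν‖ ^ 2 ∂μ +
      b * ∫ z, ‖fderiv ℝ f z‖ ^ 2 ∂(μ ∗ ν) := by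
  have hF : MemLp (fun p : E × E => f (p.1 + p.2)) 2 (μ.prod ν) :=
    (hf.memLp 2).comp_measurePreserving measurePreserving_add_conv
  calc Var[f; μ ∗ ν] = Var[fun p : E × E => f (p.1 + p.2); μ.prod ν] :=
        (measurePreserving_add_conv.variance_fun_comp hf.continuous.aemeasurable).symm
    _ = Var[fun x => ∫ y, f (x + y) ∂ν; μ] + ∫ x, Var[fun y => f (x + y); ν] ∂μ := by
        rw [variance_prod hF, add_comm]
    _ ≤ _ := add_le_add (hμ.variance_integral_add_le hf) (hν.integral_variance_add_le hf)

theorem conv (hμ : PoincareIneq μ a) (hν : PoincareIneq ν b) : PoincareIneq (μ ∗ ν) (a + b) where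
  nonneg := add_nonneg hμ.nonneg hν.nonneg
  variance_le f hf := by
    have hF := memLp_fderiv_conv (μ := μ) (ν := ν) hf
    have hJensen : ∫ x, ‖∫ y, fderiv ℝ f (x + y) ∂ν‖ ^ 2 ∂μ ≤
        ∫ z, ‖fderiv ℝ f z‖ ^ 2 ∂(μ ∗ ν) := by
      rw [integral_conv hf.integrable_sq_norm_fderiv, ← integral_prod _ hF.norm.integrable_sq]
      exact integral_sq_norm_integral_prodMk_le hF
    rw [add_mul]
    exact (hμ.variance_conv_le hν hf).trans
      (add_le_add_left (mul_le_mul_of_nonneg_left hJensen hμ.nonneg) _)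

end PoincareIneq

end Convolution

section Gradient

variable {E : Type*} [NormedAddCommGroup E] [InnerProductSpace ℝ E] [CompleteSpace E]

theorem norm_gradient_eq (f : E → ℝ) (x : E) : ‖gradient f x‖ = ‖fderiv ℝ f x‖ :=
  (InnerProductSpace.toDual ℝ E).symm.norm_map _

theorem norm_integral_gradient_comp {Ω : Type*} [MeasurableSpace Ω] (P : Measure Ω) (f : E → ℝ)
    (g : Ω → E) : ‖∫ ω, gradient f (g ω) ∂P‖ = ‖∫ ω, fderiv ℝ f (g ω) ∂P‖ := by
  have h : ∫ ω, gradient f (g ω) ∂P =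
      (InnerProductSpace.toDual ℝ E).symm (∫ ω, fderiv ℝ f (g ω) ∂P) :=
    (InnerProductSpace.toDual ℝ E).symm.toContinuousLinearEquiv.integral_comp_comm _
  rw [h, LinearIsometryEquiv.norm_map]

theorem memLp_gradient_comp {Ω : Type*} [MeasurableSpace Ω] {P : Measure Ω} {f : E → ℝ} {g : Ω → E}
    {p : ℝ≥0∞} (h : MemLp (fun ω => fderiv ℝ f (g ω)) p P) :
    MemLp (fun ω => gradient f (g ω)) p P :=
  h.of_le ((InnerProductSpace.toDual ℝ E).symm.continuous.comp_aestronglyMeasurable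
    h.aestronglyMeasurable) (.of_forall fun _ => (norm_gradient_eq f _).le)

theorem hasFDerivAt_inner_left (v x : E) :
    HasFDerivAt (fun y => ⟪v, y⟫) (InnerProductSpace.toDual ℝ E v) x :=
  (InnerProductSpace.toDual ℝ E v).hasFDerivAt

theorem norm_fderiv_add_inner_le (f : E → ℝ) (w x : E) :
    ‖fderiv ℝ (f + fun y => ⟪w, y⟫) x‖ ≤ ‖gradient f x + w‖ := by
  have hw := hasFDerivAt_inner_left w x
  by_cases hf : DifferentiableAt ℝ f x
  · rw [(hf.hasFDerivAt.add hw).fderiv, ← toDual_gradient, ← map_add, LinearIsometryEquiv.norm_map]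
  · have hfw : ¬DifferentiableAt ℝ (f + fun y => ⟪w, y⟫) x := fun h =>
      hf (by simpa using h.sub hw.differentiableAt)
    rw [fderiv_zero_of_not_differentiableAt hfw, norm_zero]
    exact norm_nonneg _

end Gradient

section Stability

theorem sq_covariance_le {Ω : Type*} [MeasurableSpace Ω] {P : Measure Ω} [IsFiniteMeasure P]
    {X Y : Ω → ℝ} (hX : MemLp X 2 P) (hY : MemLp Y 2 P) :
    cov[X, Y; P] ^ 2 ≤ Var[X; P] * Var[Y; P] := by
  have hdiscr := discrim_le_zero (a := Var[Y; P]) (b := 2 * cov[X, Y; P]) (c := Var[X; P])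
    fun t => by
      have := (variance_nonneg (X + t • Y) P).trans_eq (variance_add_const_smul hX hY t)
      linarith
  rw [discrim] at hdiscr
  linarith

theorem le_add_of_sq_le_mul_of_sub_sq_le_mul {x y p q η : ℝ} (hx : 0 ≤ x) (hp : 0 ≤ p) (hq : 0 ≤ q)
    (hy : y ^ 2 ≤ x * p) (hxy : (x - y) ^ 2 ≤ x * q) (hη : 0 < η) :
    x ≤ (1 + η) * p + (1 + η⁻¹) * q := by
  have hYoung : 2 * y * (x - y) ≤ η * y ^ 2 + η⁻¹ * (x - y) ^ 2 := two_mul_le_add_mul_sq hη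
  have hy' := mul_le_mul_of_nonneg_left hy (by positivity : 0 ≤ 1 + η)
  have hxy' := mul_le_mul_of_nonneg_left hxy (by positivity : 0 ≤ 1 + η⁻¹)
  rcases hx.eq_or_lt with rfl | hpos
  · positivity
  · refine le_of_mul_le_mul_left (?_ : x * x ≤ x * ((1 + η) * p + (1 + η⁻¹) * q)) hpos
    linarith

variable {E : Type*} [NormedAddCommGroup E] [InnerProductSpace ℝ E] [FiniteDimensional ℝ E]
  [MeasurableSpace E] [BorelSpace E]

section Convolution

variable {μ ν : Measure E} [IsProbabilityMeasure μ] [IsProbabilityMeasure ν] {a b : ℝ} {f : E → ℝ}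

theorem integral_sq_norm_integral_fderiv_add_le (hf : BddLipschitz f) :
    ∫ x, ‖∫ y, fderiv ℝ f (x + y) ∂ν‖ ^ 2 ∂μ + ∫ y, ‖∫ x, fderiv ℝ f (x + y) ∂μ‖ ^ 2 ∂ν ≤
      ∫ z, ‖fderiv ℝ f z‖ ^ 2 ∂(μ ∗ ν) + ‖∫ z, fderiv ℝ f z ∂(μ ∗ ν)‖ ^ 2 := by
  have hF : MemLp (fun p : E × E => fderiv ℝ f (p.1 + p.2)) 2 (μ.prod ν) := memLp_fderiv_conv hf
  have hES := integral_sq_norm_integral_add_le (memLp_gradient_comp hF)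
  simp only [norm_integral_gradient_comp, norm_gradient_eq] at hES
  rwa [integral_conv hf.integrable_sq_norm_fderiv,
    integral_conv ((hf.memLp_fderiv 2).integrable one_le_two),
    ← integral_prod _ hF.norm.integrable_sq, ← integral_prod _ (hF.integrable one_le_two)]

/-- Conditioning on either summand gives two bounds on the variance, whose average with weights
`b` and `a` only involves the two conditional energies through their sum. -/
theorem PoincareIneq.add_mul_variance_conv_le (hμ : PoincareIneq μ a) (hν : PoincareIneq ν b)
    (hf : BddLipschitz f) :
    (a + b) * Var[f; μ ∗ ν] ≤
      a * b * (∫ z, ‖fderiv ℝ f z‖ ^ 2 ∂(μ ∗ ν) + ‖∫ z, fderiv ℝ f z ∂(μ ∗ ν)‖ ^ 2) +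
        (a ^ 2 + b ^ 2) * ∫ z, ‖fderiv ℝ f z‖ ^ 2 ∂(μ ∗ ν) := by
  have hμν := hμ.variance_conv_le hν hf
  have hνμ : Var[f; μ ∗ ν] ≤ b * ∫ y, ‖∫ x, fderiv ℝ f (x + y) ∂μ‖ ^ 2 ∂ν +
      a * ∫ z, ‖fderiv ℝ f z‖ ^ 2 ∂(μ ∗ ν) := by
    simpa only [Measure.conv_comm ν μ, add_comm] using hν.variance_conv_le hμ hf
  have hES := integral_sq_norm_integral_fderiv_add_le (μ := μ) (ν := ν) hf
  have hμν' := mul_le_mul_of_nonneg_left hμν hν.nonneg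
  have hνμ' := mul_le_mul_of_nonneg_left hνμ hμ.nonneg
  have hES' := mul_le_mul_of_nonneg_left hES (mul_nonneg hμ.nonneg hν.nonneg)
  linarith

end Convolution

variable {ρ : Measure E} [IsProbabilityMeasure ρ] {c s : ℝ} {f : E → ℝ}

theorem memLp_gradient_add_const (hf : BddLipschitz f) (w : E) :
    MemLp (fun x => gradient f x + w) 2 ρ :=
  (memLp_gradient_comp (hf.memLp_fderiv 2)).add (memLp_const w)

theorem integral_sq_norm_gradient_add_const (hf : BddLipschitz f) (w : E) :
    ∫ x, ‖gradient f x + w‖ ^ 2 ∂ρ =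
      ∫ x, ‖fderiv ℝ f x‖ ^ 2 ∂ρ + 2 * ⟪w, ∫ x, gradient f x ∂ρ⟫ + ‖w‖ ^ 2 := by
  have hG : Integrable (gradient f) ρ :=
    (memLp_gradient_comp (hf.memLp_fderiv 2)).integrable one_le_two
  have hcross : Integrable (fun x => 2 * ⟪w, gradient f x⟫) ρ := (hG.const_inner w).const_mul 2
  have hsum : Integrable (fun x => ‖fderiv ℝ f x‖ ^ 2 + 2 * ⟪w, gradient f x⟫) ρ :=
    hf.integrable_sq_norm_fderiv.add hcross
  simp only [norm_add_sq_real, norm_gradient_eq, real_inner_comm w]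
  rw [integral_add hsum (integrable_const _), integral_add hf.integrable_sq_norm_fderiv hcross,
    integral_const_mul, integral_inner hG, integral_const, probReal_univ, one_smul]

namespace PoincareIneq

theorem memLp_two_inner (h : PoincareIneq ρ c) (v : E) : MemLp (fun x => ⟪v, x⟫) 2 ρ := by
  refine h.memLp_two (InnerProductSpace.toDual ℝ E v).lipschitz.locallyLipschitz ?_
  simp only [(hasFDerivAt_inner_left v _).fderiv]
  exact integrable_const _

theorem variance_add_inner_le (h : PoincareIneq ρ c) (hf : BddLipschitz f) (w : E) :
    Var[f + fun x => ⟪w, x⟫; ρ] ≤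
      c * (∫ x, ‖fderiv ℝ f x‖ ^ 2 ∂ρ + 2 * ⟪w, ∫ x, gradient f x ∂ρ⟫ + ‖w‖ ^ 2) := by
  obtain ⟨K, hK⟩ := hf.1
  have hlip : LocallyLipschitz (f + fun x => ⟪w, x⟫) :=
    (hK.add (InnerProductSpace.toDual ℝ E w).lipschitz).locallyLipschitz
  have hG := (memLp_gradient_add_const (ρ := ρ) hf w).norm
  have hE : MemLp (fun x => ‖fderiv ℝ (f + fun y => ⟪w, y⟫) x‖) 2 ρ :=
    hG.mono (measurable_fderiv ℝ _).norm.aestronglyMeasurable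
      (.of_forall fun x => by simpa using norm_fderiv_add_inner_le f w x)
  calc Var[f + fun x => ⟪w, x⟫; ρ] ≤ c * ∫ x, ‖fderiv ℝ (f + fun y => ⟪w, y⟫) x‖ ^ 2 ∂ρ :=
        h.variance_le_of_locallyLipschitz hlip hE.integrable_sq
    _ ≤ c * ∫ x, ‖gradient f x + w‖ ^ 2 ∂ρ :=
        mul_le_mul_of_nonneg_left (integral_mono hE.integrable_sq hG.integrable_sq fun x =>
          pow_le_pow_left₀ (norm_nonneg _) (norm_fderiv_add_inner_le f w x) 2) h.nonneg
    _ = _ := by rw [integral_sq_norm_gradient_add_const hf]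

theorem variance_inner_le (h : PoincareIneq ρ c) (v : E) :
    Var[fun x => ⟪v, x⟫; ρ] ≤ c * ‖v‖ ^ 2 := by
  have h0 : BddLipschitz (0 : E → ℝ) := ⟨⟨0, LipschitzWith.const 0⟩, 0, by simp⟩
  simpa [gradient] using h.variance_add_inner_le h0 v

/-- The discriminant of the quadratic polynomial in `t` given by the Poincaré inequality for
`f + ⟪t • v, ·⟫`. -/
theorem sq_inner_sub_covariance_le (h : PoincareIneq ρ c) (hf : BddLipschitz f) (v : E) :
    (c * ⟪v, ∫ x, gradient f x ∂ρ⟫ - cov[f, fun x => ⟪v, x⟫; ρ]) ^ 2 ≤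
      (c * ∫ x, ‖fderiv ℝ f x‖ ^ 2 ∂ρ - Var[f; ρ]) * (c * ‖v‖ ^ 2 - Var[fun x => ⟪v, x⟫; ρ]) := by
  have hquad (t : ℝ) : 0 ≤ (c * ‖v‖ ^ 2 - Var[fun x => ⟪v, x⟫; ρ]) * (t * t) +
      2 * (c * ⟪v, ∫ x, gradient f x ∂ρ⟫ - cov[f, fun x => ⟪v, x⟫; ρ]) * t +
      (c * ∫ x, ‖fderiv ℝ f x‖ ^ 2 ∂ρ - Var[f; ρ]) := by
    have hsmul : (fun x => ⟪t • v, x⟫) = t • fun x => ⟪v, x⟫ := by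
      ext x
      exact real_inner_smul_left v x t
    have ht := h.variance_add_inner_le hf (t • v)
    rw [hsmul, variance_add_const_smul (hf.memLp 2) (h.memLp_two_inner v), real_inner_smul_left,
      norm_smul, mul_pow, Real.norm_eq_abs, sq_abs] at ht
    linarith
  have hdiscr := discrim_le_zero hquad
  rw [discrim] at hdiscr
  linarith

/-- For `v` the mean gradient, the previous bound compares `c * ‖v‖ ^ 2` with a covariance, which is
small because the variances of linear functionals are. -/
theorem mul_sq_norm_integral_fderiv_le (h : PoincareIneq ρ c) (hs : 0 ≤ s)
    (hvar : ∀ v : E, Var[fun x => ⟪v, x⟫; ρ] ≤ s * ‖v‖ ^ 2) (hf : BddLipschitz f) {η : ℝ}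
    (hη : 0 < η) :
    c * ‖∫ x, fderiv ℝ f x ∂ρ‖ ^ 2 ≤ (1 + η) * (s * ∫ x, ‖fderiv ℝ f x‖ ^ 2 ∂ρ) +
      (1 + η⁻¹) * (c * ∫ x, ‖fderiv ℝ f x‖ ^ 2 ∂ρ - Var[f; ρ]) := by
  let m := ∫ x, gradient f x ∂ρ
  have hm : ‖∫ x, fderiv ℝ f x ∂ρ‖ = ‖m‖ := (norm_integral_gradient_comp ρ f id).symm
  set D := ∫ x, ‖fderiv ℝ f x‖ ^ 2 ∂ρ
  set κ := cov[f, fun x => ⟪m, x⟫; ρ]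
  have hV : Var[f; ρ] ≤ c * D := h.variance_le f hf
  have hD : 0 ≤ D := integral_nonneg fun _ => sq_nonneg _
  have hcm : 0 ≤ c * ‖m‖ ^ 2 := mul_nonneg h.nonneg (sq_nonneg _)
  have hκ : κ ^ 2 ≤ c * ‖m‖ ^ 2 * (s * D) :=
    calc κ ^ 2 ≤ Var[f; ρ] * Var[fun x => ⟪m, x⟫; ρ] :=
          sq_covariance_le (hf.memLp 2) (h.memLp_two_inner m)
      _ ≤ c * D * (s * ‖m‖ ^ 2) :=
          mul_le_mul hV (hvar m) (variance_nonneg _ _) (mul_nonneg h.nonneg hD)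
      _ = c * ‖m‖ ^ 2 * (s * D) := by ring
  have hdefect : (c * ‖m‖ ^ 2 - κ) ^ 2 ≤ c * ‖m‖ ^ 2 * (c * D - Var[f; ρ]) :=
    calc (c * ‖m‖ ^ 2 - κ) ^ 2
        ≤ (c * D - Var[f; ρ]) * (c * ‖m‖ ^ 2 - Var[fun x => ⟪m, x⟫; ρ]) := by
          simpa only [m, real_inner_self_eq_norm_sq] using h.sq_inner_sub_covariance_le hf m
      _ ≤ (c * D - Var[f; ρ]) * (c * ‖m‖ ^ 2) :=
          mul_le_mul_of_nonneg_left (sub_le_self _ (variance_nonneg _ _)) (sub_nonneg.2 hV)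
      _ = c * ‖m‖ ^ 2 * (c * D - Var[f; ρ]) := mul_comm _ _
  rw [hm]
  exact le_add_of_sq_le_mul_of_sub_sq_le_mul hcm (mul_nonneg hs hD) (sub_nonneg.2 hV) hκ hdefect hη

end PoincareIneq

end Stability

section OptimalConstant

open Filter Topology

namespace PoincareIneq

variable {E : Type*} [NormedAddCommGroup E] [NormedSpace ℝ E] [MeasurableSpace E] {ρ : Measure E}
  {c c' : ℝ}

theorem mono (h : PoincareIneq ρ c) (hc : c ≤ c') : PoincareIneq ρ c' where
  nonneg := h.nonneg.trans hc
  variance_le g hg := (h.variance_le g hg).trans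
    (mul_le_mul_of_nonneg_right hc (integral_nonneg fun _ => sq_nonneg _))

theorem of_forall_gt (hc : 0 ≤ c) (h : ∀ c' > c, PoincareIneq ρ c') : PoincareIneq ρ c where
  nonneg := hc
  variance_le g hg := by
    have hlim : Tendsto (fun c' : ℝ => c' * ∫ x, ‖fderiv ℝ g x‖ ^ 2 ∂ρ) (𝓝[>] c)
        (𝓝 (c * ∫ x, ‖fderiv ℝ g x‖ ^ 2 ∂ρ)) :=
      (tendsto_id.mul_const _).mono_left nhdsWithin_le_nhds
    exact ge_of_tendsto hlim (eventually_of_mem self_mem_nhdsWithin fun c' hc' =>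
      (h c' hc').variance_le g hg)

end PoincareIneq

section Gradient

variable {E : Type*} [NormedAddCommGroup E] [InnerProductSpace ℝ E] [CompleteSpace E]
  [MeasurableSpace E] {ρ : Measure E} {f : E → ℝ}

theorem lintegral_sq_nnnorm_gradient_eq :
    ∫⁻ x, ‖gradient f x‖₊ ^ 2 ∂ρ = ∫⁻ x, ENNReal.ofReal (‖fderiv ℝ f x‖ ^ 2) ∂ρ := by
  refine lintegral_congr fun x => ?_
  rw [← norm_gradient_eq, ENNReal.ofReal_pow (norm_nonneg _), ofReal_norm, enorm_eq_nnnorm]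

theorem lintegral_sq_nnnorm_gradient_eq_ofReal (hE : Integrable (fun x => ‖fderiv ℝ f x‖ ^ 2) ρ) :
    ∫⁻ x, ‖gradient f x‖₊ ^ 2 ∂ρ = ENNReal.ofReal (∫ x, ‖fderiv ℝ f x‖ ^ 2 ∂ρ) := by
  rw [lintegral_sq_nnnorm_gradient_eq,
    ofReal_integral_eq_lintegral_ofReal hE (.of_forall fun _ => sq_nonneg _)]

theorem integrable_sq_norm_fderiv_of_lintegral_ne_top [BorelSpace E]
    (h : ∫⁻ x, ‖gradient f x‖₊ ^ 2 ∂ρ ≠ ⊤) : Integrable (fun x => ‖fderiv ℝ f x‖ ^ 2) ρ := by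
  refine ⟨((measurable_fderiv ℝ f).norm.pow_const 2).aestronglyMeasurable, ?_⟩
  rw [hasFiniteIntegral_iff_ofReal (.of_forall fun _ => sq_nonneg _),
    ← lintegral_sq_nnnorm_gradient_eq]
  exact h.lt_top

end Gradient

variable {d : ℕ} {ρ : Measure (EuclideanSpace ℝ (Fin d))} [IsProbabilityMeasure ρ] {c : ℝ}

theorem PoincareIneq.poincareConst_le_of_pos (h : PoincareIneq ρ c) (hc : 0 < c) :
    poincareConst ρ ≤ ENNReal.ofReal c := by
  refine sInf_le fun f hf => ?_
  by_cases htop : ∫⁻ x, ‖gradient f x‖₊ ^ 2 ∂ρ = ⊤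
  · rw [htop, ENNReal.mul_top (by simpa using hc)]
    exact le_top
  · have hE := integrable_sq_norm_fderiv_of_lintegral_ne_top htop
    rw [lintegral_sq_nnnorm_gradient_eq_ofReal hE, ← ENNReal.ofReal_mul hc.le]
    exact h.evariance_le hf hE

theorem PoincareIneq.poincareConst_le (h : PoincareIneq ρ c) :
    poincareConst ρ ≤ ENNReal.ofReal c := by
  have hlim : Tendsto ENNReal.ofReal (𝓝[>] c) (𝓝 (ENNReal.ofReal c)) :=
    ENNReal.continuous_ofReal.continuousAt.mono_left nhdsWithin_le_nhds
  exact ge_of_tendsto hlim (eventually_of_mem self_mem_nhdsWithin fun c' hc' =>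
    (h.mono hc'.le).poincareConst_le_of_pos (h.nonneg.trans_lt hc'))

theorem poincareIneq_of_poincareConst_lt (h : poincareConst ρ < ENNReal.ofReal c) :
    PoincareIneq ρ c where
  nonneg := (ENNReal.ofReal_pos.1 (pos_of_gt h)).le
  variance_le g hg := by
    obtain ⟨K, hK⟩ := hg.1
    have hc : 0 ≤ c := (ENNReal.ofReal_pos.1 (pos_of_gt h)).le
    obtain ⟨C, hC, hCc⟩ := sInf_lt_iff.1 h
    have hg' := (hC g hK.locallyLipschitz).trans (mul_le_mul_left hCc.le _)
    rw [lintegral_sq_nnnorm_gradient_eq_ofReal hg.integrable_sq_norm_fderiv,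
      ← ENNReal.ofReal_mul hc] at hg'
    exact ENNReal.toReal_le_of_le_ofReal
      (mul_nonneg hc (integral_nonneg fun _ => sq_nonneg _)) hg'

theorem isLeast_poincareConst (h : poincareConst ρ ≠ ⊤) :
    IsLeast {c | PoincareIneq ρ c} (poincareConst ρ).toReal where
  left := .of_forall_gt toReal_nonneg fun _ hc =>
    poincareIneq_of_poincareConst_lt ((ENNReal.lt_ofReal_iff_toReal_lt h).2 hc)
  right _ hc := ENNReal.toReal_le_of_le_ofReal hc.nonneg hc.poincareConst_le

end OptimalConstant

section MaximalVariance

variable {d : ℕ} {ρ : Measure (EuclideanSpace ℝ (Fin d))}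

theorem maxDirVar_nonneg : 0 ≤ maxDirVar ρ :=
  Real.iSup_nonneg fun _ => variance_nonneg _ _

variable [IsProbabilityMeasure ρ] {c : ℝ}

namespace PoincareIneq

theorem variance_inner_le_of_norm_eq_one (h : PoincareIneq ρ c)
    (α : {a : EuclideanSpace ℝ (Fin d) // ‖a‖ = 1}) :
    Var[fun x => ⟪(α : EuclideanSpace ℝ (Fin d)), x⟫; ρ] ≤ c := by
  simpa [α.2] using h.variance_inner_le (α : EuclideanSpace ℝ (Fin d))

theorem maxDirVar_le (h : PoincareIneq ρ c) : maxDirVar ρ ≤ c :=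
  Real.iSup_le h.variance_inner_le_of_norm_eq_one h.nonneg

theorem variance_inner_le_maxDirVar_mul (h : PoincareIneq ρ c) (v : EuclideanSpace ℝ (Fin d)) :
    Var[fun x => ⟪v, x⟫; ρ] ≤ maxDirVar ρ * ‖v‖ ^ 2 := by
  rcases eq_or_ne v 0 with rfl | hv
  · simpa using h.variance_inner_le 0
  let α : {a : EuclideanSpace ℝ (Fin d) // ‖a‖ = 1} := ⟨‖v‖⁻¹ • v, norm_smul_inv_norm hv⟩
  have hle : Var[fun x => ⟪(α : EuclideanSpace ℝ (Fin d)), x⟫; ρ] ≤ maxDirVar ρ :=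
    le_ciSup ⟨c, Set.forall_mem_range.2 h.variance_inner_le_of_norm_eq_one⟩ α
  have hscale : (fun x => ⟪v, x⟫) = fun x => ‖v‖ * ⟪(α : EuclideanSpace ℝ (Fin d)), x⟫ := by
    ext x
    rw [real_inner_smul_left, mul_inv_cancel_left₀ (norm_ne_zero_iff.2 hv)]
  rw [hscale, variance_const_mul, mul_comm]
  exact mul_le_mul_of_nonneg_right hle (sq_nonneg _)

end PoincareIneq

end MaximalVariance

section Deficit

open Filter Topology

variable {E : Type*} [NormedAddCommGroup E] [InnerProductSpace ℝ E] [FiniteDimensional ℝ E]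
  [MeasurableSpace E] [BorelSpace E] {μ ν : Measure E} [IsProbabilityMeasure μ]
  [IsProbabilityMeasure ν] {a b C s : ℝ}

theorem PoincareIneq.conv_of_variance_inner_le (hμ : PoincareIneq μ a) (hν : PoincareIneq ν b)
    (hab : 0 < a + b) (hC : PoincareIneq (μ ∗ ν) C) (hC0 : 0 < C) (hs : 0 ≤ s)
    (hvar : ∀ v : E, Var[fun x => ⟪v, x⟫; μ ∗ ν] ≤ s * ‖v‖ ^ 2) {η : ℝ} (hη : 0 < η) :
    PoincareIneq (μ ∗ ν)
      (((a * b + a ^ 2 + b ^ 2) * C + a * b * ((1 + η) * s + (1 + η⁻¹) * C)) /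
        ((a + b) * C + a * b * (1 + η⁻¹))) := by
  have ha := hμ.nonneg
  have hb := hν.nonneg
  refine ⟨by positivity, fun f hf => ?_⟩
  have hstab := mul_le_mul_of_nonneg_left
    (hC.mul_sq_norm_integral_fderiv_le hs hvar hf hη) (mul_nonneg ha hb)
  have hconv := mul_le_mul_of_nonneg_left (hμ.add_mul_variance_conv_le hν hf) hC.nonneg
  rw [div_mul_eq_mul_div, le_div_iff₀ (by positivity)]
  linarith

theorem add_mul_sq_le_of_isLeast_poincareIneq_conv (hμ : PoincareIneq μ a) (hν : PoincareIneq ν b)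
    (hab : 0 < a + b) (hC : IsLeast {c | PoincareIneq (μ ∗ ν) c} C) (hC0 : 0 < C) (hs : 0 ≤ s)
    (hvar : ∀ v : E, Var[fun x => ⟪v, x⟫; μ ∗ ν] ≤ s * ‖v‖ ^ 2) :
    (a + b) * C ^ 2 ≤ (a * b + a ^ 2 + b ^ 2) * C + a * b * s := by
  have ha := hμ.nonneg
  have hb := hν.nonneg
  have hbound (η : ℝ) (hη : 0 < η) :
      (a + b) * C ^ 2 ≤ (a * b + a ^ 2 + b ^ 2) * C + a * b * ((1 + η) * s) := by
    have hle := hC.2 (hμ.conv_of_variance_inner_le hν hab hC.1 hC0 hs hvar hη)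
    rw [le_div_iff₀ (by positivity)] at hle
    linarith
  have hlim : Tendsto (fun η : ℝ => (a * b + a ^ 2 + b ^ 2) * C + a * b * ((1 + η) * s)) (𝓝[>] 0)
      (𝓝 ((a * b + a ^ 2 + b ^ 2) * C + a * b * s)) := by
    refine (Continuous.tendsto' (by fun_prop) 0 _ (by ring)).mono_left nhdsWithin_le_nhds
  exact ge_of_tendsto hlim (eventually_of_mem self_mem_nhdsWithin hbound)

theorem poincareConst_conv_stability_general (hμ : PoincareIneq μ a) (hν : PoincareIneq ν b)
    (hC : IsLeast {c | PoincareIneq (μ ∗ ν) c} C) (hs : 0 ≤ s)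
    (hvar : ∀ v : E, Var[fun x => ⟪v, x⟫; μ ∗ ν] ≤ s * ‖v‖ ^ 2) :
    C ≤ a + b - a * b / (a + b) * ((C - s) / C) := by
  have hadd : C ≤ a + b := hC.2 (hμ.conv hν)
  rcases hC.1.nonneg.eq_or_lt with rfl | hC0
  · simpa using hadd
  have hab : 0 < a + b := hC0.trans_le hadd
  have hsq := add_mul_sq_le_of_isLeast_poincareIneq_conv hμ hν hab hC hC0 hs hvar
  calc C = (a + b) * C ^ 2 / ((a + b) * C) := by field_simp
    _ ≤ ((a * b + a ^ 2 + b ^ 2) * C + a * b * s) / ((a + b) * C) := by gcongr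
    _ = a + b - a * b / (a + b) * ((C - s) / C) := by
      field_simp
      ring

theorem sq_div_sq_add_mul_le_div {C s : ℝ} (hs : 0 ≤ s) (hsC : s ≤ C) :
    (C - s) ^ 2 / ((C - s) ^ 2 + C * s) ≤ (C - s) / C := by
  rcases hsC.eq_or_lt with rfl | hlt
  · simp
  have hC : 0 < C := hs.trans_lt hlt
  have hdiff : 0 < C - s := sub_pos.2 hlt
  rw [div_le_div_iff₀ (by positivity) hC]
  nlinarith [mul_nonneg hdiff.le (sq_nonneg s)]

end Deficit

/-- **Dimension-free stability of subadditivity of the Poincaré constant on convolutions.**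
With `σ² := σ²(μ ⋆ ν)`,
`C_p(μ⋆ν) ≤ (C_p(μ) + C_p(ν)) − [C_p(μ)C_p(ν)/(C_p(μ)+C_p(ν))] ·
(C_p(μ⋆ν) − σ²)²/((C_p(μ⋆ν) − σ²)² + C_p(μ⋆ν)σ²)`. -/
theorem poincareConst_conv_stability {d : ℕ} (μ ν : Measure (EuclideanSpace ℝ (Fin d)))
    [IsProbabilityMeasure μ] [IsProbabilityMeasure ν]
    (hμ2 : Integrable (fun x => ‖x‖ ^ 2) μ) (hν2 : Integrable (fun x => ‖x‖ ^ 2) ν)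
    (hμp : poincareConst μ ≠ ⊤) (hνp : poincareConst ν ≠ ⊤) :
    poincareConst (μ ∗ ν) ≠ ⊤ ∧
      (poincareConst (μ ∗ ν)).toReal ≤
        ((poincareConst μ).toReal + (poincareConst ν).toReal) -
          (poincareConst μ).toReal * (poincareConst ν).toReal /
              ((poincareConst μ).toReal + (poincareConst ν).toReal) *
            (((poincareConst (μ ∗ ν)).toReal - maxDirVar (μ ∗ ν)) ^ 2 /
              (((poincareConst (μ ∗ ν)).toReal - maxDirVar (μ ∗ ν)) ^ 2 +
                (poincareConst (μ ∗ ν)).toReal * maxDirVar (μ ∗ ν))) := by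
  have hμ := (isLeast_poincareConst hμp).1
  have hν := (isLeast_poincareConst hνp).1
  have hfin : poincareConst (μ ∗ ν) ≠ ⊤ :=
    ne_top_of_le_ne_top ofReal_ne_top (hμ.conv hν).poincareConst_le
  have hC := isLeast_poincareConst hfin
  refine ⟨hfin, (poincareConst_conv_stability_general hμ hν hC maxDirVar_nonneg
    hC.1.variance_inner_le_maxDirVar_mul).trans ?_⟩
  exact sub_le_sub_left (mul_le_mul_of_nonneg_left
    (sq_div_sq_add_mul_le_div maxDirVar_nonneg hC.1.maxDirVar_le)
    (div_nonneg (mul_nonneg hμ.nonneg hν.nonneg) (add_nonneg hμ.nonneg hν.nonneg))) _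
end
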